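/- arXiv:0907.0887 — 2 statements merged into one kernel-verified Lean document; each statement's English description precedes it below -/
import Mathlib

section
/- For sufficiently large ρ the collection of sets Ξ(V), with V ranging over all lattice r-subspaces, satisfies: (i) ℝ^d = ∪_V Ξ(V); (ii) Ξ(V₁) ∩ Ξ(V₂) = ∅ whenever V₁ ≠ V₂; (iii) for every lattice r-subspace V and every ξ ∈ Ξ(V), one has Υ(ξ) ⊆ Ξ(V) and N(ξ) ⊆ V. -/
noncomputable section

open Set Submodule Module MeasureTheory Relation
open scoped RealInnerProductSpace

variable {d : ℕ}

/-- The lattice Γ generated over ℤ by the basis `B` of ℝ^d. -/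
def latticeOf (B : Basis (Fin d) ℝ (EuclideanSpace ℝ (Fin d))) :
    Submodule ℤ (EuclideanSpace ℝ (Fin d)) :=
  Submodule.span ℤ (Set.range B)

/-- The determinant d(Γ) of the lattice generated by `B`. -/
def latDet (B : Basis (Fin d) ℝ (EuclideanSpace ℝ (Fin d))) : ℝ :=
  |(EuclideanSpace.basisFun (Fin d) ℝ).toBasis.det (fun i => B i)|

/-- The dual lattice Γ† = {θ : θ·g ∈ 2πℤ for all g ∈ Γ}. -/
def dualLattice (B : Basis (Fin d) ℝ (EuclideanSpace ℝ (Fin d))) :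
    Set (EuclideanSpace ℝ (Fin d)) :=
  {θ | ∀ g ∈ latticeOf B, ∃ k : ℤ, ⟪θ, g⟫ = 2 * Real.pi * k}

/-- Θ_r : nonzero dual lattice vectors of norm at most r. -/
def Theta (B : Basis (Fin d) ℝ (EuclideanSpace ℝ (Fin d))) (r : ℝ) :
    Set (EuclideanSpace ℝ (Fin d)) :=
  {θ | θ ∈ dualLattice B ∧ θ ≠ 0 ∧ ‖θ‖ ≤ r}

/-- Θ_r⁰ : dual lattice vectors of norm at most r (including 0). -/
def Theta0 (B : Basis (Fin d) ℝ (EuclideanSpace ℝ (Fin d))) (r : ℝ) :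
    Set (EuclideanSpace ℝ (Fin d)) :=
  {θ | θ ∈ dualLattice B ∧ ‖θ‖ ≤ r}

/-- A lattice r-subspace: a subspace spanned by dual lattice vectors from Θ_r⁰. -/
def IsLatticeSubspace (B : Basis (Fin d) ℝ (EuclideanSpace ℝ (Fin d))) (r : ℝ)
    (V : Submodule ℝ (EuclideanSpace ℝ (Fin d))) : Prop :=
  ∃ S : Set (EuclideanSpace ℝ (Fin d)), S ⊆ Theta0 B r ∧ V = Submodule.span ℝ S

/-- Orthogonal projection ξ_V onto a subspace, viewed in the ambient space. -/
def projV (V : Submodule ℝ (EuclideanSpace ℝ (Fin d))) (ξ : EuclideanSpace ℝ (Fin d)) :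
    EuclideanSpace ℝ (Fin d) :=
  (orthogonalProjection V ξ : EuclideanSpace ℝ (Fin d))

/-- ω_n: the volume of the unit ball in ℝ^n. -/
def unitBallVol (n : ℕ) : ℝ :=
  (MeasureTheory.volume (Metric.ball (0 : EuclideanSpace ℝ (Fin n)) 1)).toReal

/-- The resonant layer Λ(θ) (= ℝ^d when θ = 0). -/
def layer (ρ a : ℝ) (θ : EuclideanSpace ℝ (Fin d)) : Set (EuclideanSpace ℝ (Fin d)) :=
  {ξ | θ = 0 ∨ |⟪ξ, θ⟫| < ρ ^ a * ‖θ‖}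

/-- Υ_θ(ξ): the points θ-resonant congruent to ξ. -/
def upsTheta (ρ a : ℝ) (θ ξ : EuclideanSpace ℝ (Fin d)) : Set (EuclideanSpace ℝ (Fin d)) :=
  {η | ξ ∈ layer ρ a θ ∧ η ∈ layer ρ a θ ∧ ∃ l : ℤ, ξ - η = (l : ℝ) • θ}

/-- One step of resonant congruence (with some θ ∈ Θ_r⁰). -/
def resStep (B : Basis (Fin d) ℝ (EuclideanSpace ℝ (Fin d))) (ρ a r : ℝ)
    (ξ η : EuclideanSpace ℝ (Fin d)) : Prop :=
  ∃ θ ∈ Theta0 B r, η ∈ upsTheta ρ a θ ξ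

/-- Υ(ξ): all points resonant congruent to ξ. -/
def Ups (B : Basis (Fin d) ℝ (EuclideanSpace ℝ (Fin d))) (ρ a r : ℝ)
    (ξ : EuclideanSpace ℝ (Fin d)) : Set (EuclideanSpace ℝ (Fin d)) :=
  {η | Relation.ReflTransGen (resStep B ρ a r) ξ η}

/-- N(ξ) = Υ(ξ) − ξ. -/
def resN (B : Basis (Fin d) ℝ (EuclideanSpace ℝ (Fin d))) (ρ a r : ℝ)
    (ξ : EuclideanSpace ℝ (Fin d)) : Set (EuclideanSpace ℝ (Fin d)) :=
  {m | ξ + m ∈ Ups B ρ a r ξ}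

/-- Ξ₁(V) = {ξ : |ξ_V| < ρ^{α_n}}, n = dim V. -/
def Xi1 (ρ : ℝ) (α : ℕ → ℝ) (V : Submodule ℝ (EuclideanSpace ℝ (Fin d))) :
    Set (EuclideanSpace ℝ (Fin d)) :=
  {ξ | ‖projV V ξ‖ < ρ ^ α (Module.finrank ℝ V)}

/-- Ξ₂(V) = ∪_{ξ ∈ Ξ₁(V)} Υ(ξ). -/
def Xi2 (B : Basis (Fin d) ℝ (EuclideanSpace ℝ (Fin d))) (ρ r : ℝ) (α : ℕ → ℝ)
    (V : Submodule ℝ (EuclideanSpace ℝ (Fin d))) : Set (EuclideanSpace ℝ (Fin d)) :=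
  {η | ∃ ξ ∈ Xi1 ρ α V, η ∈ Ups B ρ (α 1) r ξ}

/-- Ξ(V): Ξ₂(V) minus the Ξ₂(W) for all lattice r-subspaces W of larger dimension. -/
def Xi (B : Basis (Fin d) ℝ (EuclideanSpace ℝ (Fin d))) (ρ r : ℝ) (α : ℕ → ℝ)
    (V : Submodule ℝ (EuclideanSpace ℝ (Fin d))) : Set (EuclideanSpace ℝ (Fin d)) :=
  Xi2 B ρ r α V \
    ⋃ W ∈ {W : Submodule ℝ (EuclideanSpace ℝ (Fin d)) |
        IsLatticeSubspace B r W ∧ Module.finrank ℝ V < Module.finrank ℝ W},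
      Xi2 B ρ r α W

/-- The standing conditions on the parameters ρ ≥ 1, r, κ > 0 and the exponents α_j:
0 = α₀, α_{n+1} > α_n + 2κd², α_d < 1, r ≤ ρ^κ, and r ≥ r₀ (i.e. Θ_r⁰ spans ℝ^d). -/
def GoodParams (B : Basis (Fin d) ℝ (EuclideanSpace ℝ (Fin d))) (ρ r κ : ℝ)
    (α : ℕ → ℝ) : Prop :=
  1 ≤ ρ ∧ 0 < κ ∧ α 0 = 0 ∧ (∀ n < d, α n + 2 * κ * (d : ℝ) ^ 2 < α (n + 1)) ∧
    α d < 1 ∧ r ≤ ρ ^ κ ∧ Submodule.span ℝ (Theta0 B r) = ⊤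


/-- The linear map `x ↦ (⟪x, B j⟫)_j`. -/
def pairing (B : Basis (Fin d) ℝ (EuclideanSpace ℝ (Fin d))) :
    EuclideanSpace ℝ (Fin d) →ₗ[ℝ] (Fin d → ℝ) :=
  LinearMap.pi fun j => (innerₛₗ ℝ : EuclideanSpace ℝ (Fin d) →ₗ[ℝ] _) (B j)

lemma pairing_apply (B : Basis (Fin d) ℝ (EuclideanSpace ℝ (Fin d)))
    (x : EuclideanSpace ℝ (Fin d)) (j : Fin d) : pairing B x j = ⟪x, B j⟫ := by
  simp [pairing, real_inner_comm]

lemma pairing_ker (B : Basis (Fin d) ℝ (EuclideanSpace ℝ (Fin d))) :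
    LinearMap.ker (pairing B) = ⊥ := by
  refine LinearMap.ker_eq_bot'.2 fun x hx => ?_
  refine InnerProductSpace.ext_inner_right_basis B fun j => ?_
  rw [← pairing_apply, hx, inner_zero_left, Pi.zero_apply]

/-- Determinants of dual lattice vectors paired with the basis are bounded away from zero. -/
lemma one_le_abs_det_pairing (B : Basis (Fin d) ℝ (EuclideanSpace ℝ (Fin d)))
    {v : Fin d → EuclideanSpace ℝ (Fin d)} (hv : ∀ i, v i ∈ dualLattice B)
    (hli : LinearIndependent ℝ v) :
    1 ≤ |(Matrix.of fun i => pairing B (v i)).det| := by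
  have hB : ∀ i j, ∃ k : ℤ, ⟪v i, B j⟫ = 2 * Real.pi * k := fun i j =>
    hv i _ (Submodule.subset_span ⟨j, rfl⟩)
  choose k hk using hB
  set A : Matrix (Fin d) (Fin d) ℝ := Matrix.of fun i => pairing B (v i) with hA
  have hA' : A = (2 * Real.pi) • (Matrix.of k).map (Int.cast : ℤ → ℝ) := by
    ext i j
    simp [hA, pairing_apply, hk]
  have hunit : IsUnit A := by
    rw [← Matrix.linearIndependent_rows_iff_isUnit]
    exact hli.map' (pairing B) (pairing_ker B)
  have hdet : A.det = (2 * Real.pi) ^ d * ((Matrix.of k).det : ℝ) := by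
    rw [hA', Matrix.det_smul, Fintype.card_fin, Int.cast_det]
  have hne : A.det ≠ 0 := ((Matrix.isUnit_iff_isUnit_det A).1 hunit).ne_zero
  have hk0 : (Matrix.of k).det ≠ 0 := by
    rintro h
    exact hne (by rw [hdet, h]; simp)
  have h1 : (1 : ℝ) ≤ |((Matrix.of k).det : ℝ)| := by
    exact_mod_cast Int.one_le_abs hk0
  have h2 : (1 : ℝ) ≤ (2 * Real.pi) ^ d := one_le_pow₀ (by linarith [Real.pi_gt_three])
  rw [hdet, abs_mul, abs_of_nonneg (zero_le_one.trans h2)]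
  exact one_le_mul_of_one_le_of_one_le h2 h1

/-- A crude Hadamard inequality with row bounds. -/
lemma abs_det_le_factorial_mul_prod (A : Matrix (Fin d) (Fin d) ℝ) {c : Fin d → ℝ}
    (hA : ∀ i j, |A i j| ≤ c i) : |A.det| ≤ d.factorial * ∏ i, c i := by
  rw [Matrix.det_apply]
  refine (Finset.abs_sum_le_sum_abs _ _).trans ?_
  have h : ∀ σ ∈ (Finset.univ : Finset (Equiv.Perm (Fin d))),
      |Equiv.Perm.sign σ • ∏ i, A (σ i) i| ≤ ∏ i, c i := by
    intro σ _
    have hs : |Equiv.Perm.sign σ • ∏ i, A (σ i) i| = |∏ i, A (σ i) i| := by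
      rcases Int.units_eq_one_or (Equiv.Perm.sign σ) with h | h <;> simp [h]
    rw [hs, Finset.abs_prod, ← Equiv.prod_comp σ c]
    exact Finset.prod_le_prod (fun _ _ => abs_nonneg _) fun i _ => hA _ _
  refine (Finset.sum_le_card_nsmul _ _ _ h).trans ?_
  simp [Fintype.card_perm]

/-- If `θ ∈ Θ_r⁰` lies outside a lattice `r`-subspace `V`, then some linear functional vanishes on
`V`, is bounded below at `θ`, and has norm polynomially bounded in `r`. -/
lemma exists_separating_functional (B : Basis (Fin d) ℝ (EuclideanSpace ℝ (Fin d))) :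
    ∃ C : ℝ, 0 ≤ C ∧ ∀ (R r : ℝ) (V : Submodule ℝ (EuclideanSpace ℝ (Fin d)))
      (θ : EuclideanSpace ℝ (Fin d)), 1 ≤ R → r ≤ R → Submodule.span ℝ (Theta0 B r) = ⊤ →
      IsLatticeSubspace B r V → θ ∈ Theta0 B r → θ ∉ V →
      ∃ φ : EuclideanSpace ℝ (Fin d) →ₗ[ℝ] ℝ, (∀ u ∈ V, φ u = 0) ∧ 1 ≤ |φ θ| ∧
        ∀ x, |φ x| * R ≤ C * R ^ d * ‖x‖ := by
  obtain ⟨b, hb⟩ : ∃ b : ℝ, ∀ j, ‖B j‖ ≤ b :=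
    ⟨∑ j, ‖B j‖, fun j => Finset.single_le_sum (f := fun j => ‖B j‖)
      (fun _ _ => norm_nonneg _) (Finset.mem_univ j)⟩
  refine ⟨d.factorial * |b| ^ d, by positivity, ?_⟩
  rintro R r V θ hR hrR htop ⟨S, hS, rfl⟩ hθ hθV
  obtain ⟨S', hS'S, hspan, hli⟩ := exists_linearIndependent ℝ S
  have hli' : LinearIndepOn ℝ id (insert θ S') :=
    LinearIndepOn.id_insert hli (by rwa [hspan])
  obtain ⟨T, hT, hsT, hTspan, hTli⟩ := exists_linearIndepOn_id_extension hli'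
    (Set.insert_subset hθ (hS'S.trans hS))
  have hTtop : Submodule.span ℝ T = ⊤ := by
    rw [eq_top_iff, ← htop]
    exact Submodule.span_le.2 hTspan
  let bT : Basis T ℝ (EuclideanSpace ℝ (Fin d)) :=
    Basis.mk (v := (Subtype.val : T → _)) hTli (by simp [hTtop])
  let e : Fin d ≃ T := B.indexEquiv bT
  let v : Fin d → EuclideanSpace ℝ (Fin d) := fun i => (e i : EuclideanSpace ℝ (Fin d))
  have hvT : ∀ i, v i ∈ Theta0 B r := fun i => hT (e i).2
  have hvli : LinearIndependent ℝ v := LinearIndependent.comp hTli e e.injective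
  let i₀ : Fin d := e.symm ⟨θ, hsT (Set.mem_insert _ _)⟩
  have hi₀ : v i₀ = θ := by simp [v, i₀]
  let A : Matrix (Fin d) (Fin d) ℝ := Matrix.of fun i => pairing B (v i)
  let φ : EuclideanSpace ℝ (Fin d) →ₗ[ℝ] ℝ :=
    (Matrix.detRowAlternating.toMultilinearMap.toLinearMap A i₀) ∘ₗ pairing B
  have hφ : ∀ x, φ x = (A.updateRow i₀ (pairing B x)).det := fun x => rfl
  refine ⟨φ, ?_, ?_, ?_⟩
  · have hle : Submodule.span ℝ S ≤ LinearMap.ker φ := by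
      rw [← hspan, Submodule.span_le]
      intro s hs
      have hsθ : s ≠ θ := by
        rintro rfl
        exact hθV (Submodule.subset_span (hS'S hs))
      have hs' : v (e.symm ⟨s, hsT (Set.mem_insert_of_mem _ hs)⟩) = s := by simp [v]
      set i := e.symm ⟨s, hsT (Set.mem_insert_of_mem _ hs)⟩
      have hi : i ≠ i₀ := by
        intro h
        rw [h, hi₀] at hs'
        exact hsθ hs'.symm
      change φ s = 0
      rw [hφ]
      refine Matrix.det_zero_of_row_eq hi ?_
      rw [Matrix.updateRow_ne hi, Matrix.updateRow_self]
      exact congrArg (pairing B) hs'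
    exact fun u hu => hle hu
  · have : A.updateRow i₀ (pairing B θ) = A := by
      rw [← hi₀]
      exact Matrix.updateRow_eq_self A i₀
    rw [hφ, this]
    exact one_le_abs_det_pairing B (fun i => (hvT i).1) hvli
  · intro x
    let c : Fin d → ℝ := fun i => |b| * (if i = i₀ then ‖x‖ else R)
    have hpair : ∀ y j, |pairing B y j| ≤ |b| * ‖y‖ := by
      intro y j
      rw [pairing_apply, mul_comm]
      refine (abs_real_inner_le_norm _ _).trans ?_
      exact mul_le_mul_of_nonneg_left ((hb j).trans (le_abs_self b)) (norm_nonneg _)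
    have hrow : ∀ i j, |A.updateRow i₀ (pairing B x) i j| ≤ c i := by
      intro i j
      by_cases hi : i = i₀
      · subst hi
        simpa [c] using hpair x j
      · rw [Matrix.updateRow_ne hi]
        simp only [c, hi, if_false]
        refine (hpair (v i) j).trans ?_
        exact mul_le_mul_of_nonneg_left ((hvT i).2.trans hrR) (abs_nonneg _)
    have hprod : (∏ i, c i) * R = |b| ^ d * R ^ d * ‖x‖ := by
      have h1 : ∏ i, c i = |b| ^ d * (‖x‖ * R ^ (d - 1)) := by
        rw [Finset.prod_mul_distrib, Finset.prod_const, Finset.card_univ, Fintype.card_fin,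
          Finset.prod_ite, Finset.prod_const, Finset.prod_const, Finset.filter_eq' ,
          if_pos (Finset.mem_univ _), Finset.card_singleton, pow_one, Finset.filter_ne',
          Finset.card_erase_of_mem (Finset.mem_univ _), Finset.card_univ, Fintype.card_fin]
      have h2 : R ^ d = R ^ (d - 1) * R := (pow_sub_one_mul (Fin.pos i₀).ne' R).symm
      rw [h1, h2]
      ring
    calc |φ x| * R ≤ (d.factorial * ∏ i, c i) * R :=
          mul_le_mul_of_nonneg_right (abs_det_le_factorial_mul_prod _ hrow) (by linarith)
      _ = d.factorial * |b| ^ d * R ^ d * ‖x‖ := by rw [mul_assoc, hprod]; ring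

/-- `x` has inner products of size at most `M` with the unit vectors of `V`,
that is `|x_V| ≤ M`. -/
def ProjBound (V : Submodule ℝ (EuclideanSpace ℝ (Fin d))) (x : EuclideanSpace ℝ (Fin d))
    (M : ℝ) : Prop :=
  ∀ u ∈ V, |⟪x, u⟫| ≤ M * ‖u‖

lemma inner_projV (V : Submodule ℝ (EuclideanSpace ℝ (Fin d)))
    (x : EuclideanSpace ℝ (Fin d)) {u : EuclideanSpace ℝ (Fin d)} (hu : u ∈ V) :
    ⟪projV V x, u⟫ = ⟪x, u⟫ :=
  Submodule.inner_orthogonalProjectionOnto_eq_of_mem_right ⟨u, hu⟩ x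

lemma projV_mem (V : Submodule ℝ (EuclideanSpace ℝ (Fin d)))
    (x : EuclideanSpace ℝ (Fin d)) : projV V x ∈ V :=
  Subtype.property _

lemma projBound_norm_projV (V : Submodule ℝ (EuclideanSpace ℝ (Fin d)))
    (x : EuclideanSpace ℝ (Fin d)) : ProjBound V x ‖projV V x‖ := by
  intro u hu
  rw [← inner_projV V x hu]
  exact abs_real_inner_le_norm _ _

lemma ProjBound.norm_projV_le {V : Submodule ℝ (EuclideanSpace ℝ (Fin d))}
    {x : EuclideanSpace ℝ (Fin d)} {M : ℝ} (h : ProjBound V x M) (hM : 0 ≤ M) :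
    ‖projV V x‖ ≤ M := by
  have h1 := h _ (projV_mem V x)
  rw [← inner_projV V x (projV_mem V x), real_inner_self_eq_norm_mul_norm,
    abs_of_nonneg (by positivity)] at h1
  rcases (norm_nonneg (projV V x)).eq_or_lt with h0 | h0
  · rwa [← h0]
  · exact le_of_mul_le_mul_right h1 h0

lemma ProjBound.mono {V V' : Submodule ℝ (EuclideanSpace ℝ (Fin d))}
    {x : EuclideanSpace ℝ (Fin d)} {M M' : ℝ} (h : ProjBound V x M) (hV : V' ≤ V)
    (hM : M ≤ M') : ProjBound V' x M' := fun u hu =>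
  (h u (hV hu)).trans (mul_le_mul_of_nonneg_right hM (norm_nonneg u))

lemma ProjBound.of_norm_sub_le {V : Submodule ℝ (EuclideanSpace ℝ (Fin d))}
    {x y : EuclideanSpace ℝ (Fin d)} {M L : ℝ} (h : ProjBound V x M) (hxy : ‖y - x‖ ≤ L) :
    ProjBound V y (M + L) := by
  intro u hu
  have h1 : ⟪y, u⟫ = ⟪x, u⟫ + ⟪y - x, u⟫ := by rw [inner_sub_left]; ring
  have h2 : |⟪y - x, u⟫| ≤ L * ‖u‖ := (abs_real_inner_le_norm _ _).trans
    (mul_le_mul_of_nonneg_right hxy (norm_nonneg u))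
  rw [h1, add_mul]
  exact (abs_add_le _ _).trans (add_le_add (h u hu) h2)

lemma ProjBound.norm_sub_le {V : Submodule ℝ (EuclideanSpace ℝ (Fin d))}
    {x y : EuclideanSpace ℝ (Fin d)} {M : ℝ} (hx : ProjBound V x M) (hy : ProjBound V y M)
    (hM : 0 ≤ M) (hxy : y - x ∈ V) : ‖y - x‖ ≤ 2 * M := by
  have h1 : ‖y - x‖ * ‖y - x‖ = ⟪y, y - x⟫ - ⟪x, y - x⟫ := by
    rw [← inner_sub_left, real_inner_self_eq_norm_mul_norm]
  have h2 := abs_le.1 (hx _ hxy)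
  have h3 := abs_le.1 (hy _ hxy)
  have h4 : ‖y - x‖ * ‖y - x‖ ≤ (2 * M) * ‖y - x‖ := by linarith [h2.1, h3.2]
  rcases (norm_nonneg (y - x)).eq_or_lt with h0 | h0
  · rw [← h0]; linarith
  · exact le_of_mul_le_mul_right h4 h0

/-- Enlarging a lattice subspace by one vector of `Θ_r⁰` increases projections by at most a factor
polynomial in `r`. -/
lemma exists_projBound_sup_span (B : Basis (Fin d) ℝ (EuclideanSpace ℝ (Fin d))) :
    ∃ D : ℝ, 1 ≤ D ∧ ∀ (R r : ℝ), 1 ≤ R → r ≤ R → Submodule.span ℝ (Theta0 B r) = ⊤ →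
      ∀ (V : Submodule ℝ (EuclideanSpace ℝ (Fin d))) (θ x : EuclideanSpace ℝ (Fin d)) (M : ℝ),
      IsLatticeSubspace B r V → θ ∈ Theta0 B r → θ ∉ V → 0 ≤ M →
      ProjBound V x M → |⟪x, θ⟫| ≤ M * ‖θ‖ →
      ProjBound (V ⊔ Submodule.span ℝ {θ}) x (D * R ^ d * M) := by
  obtain ⟨C, hC, hφ⟩ := exists_separating_functional B
  refine ⟨1 + 2 * C, by linarith, ?_⟩
  intro R r hR hrR htop V θ x M hV hθ hθV hM hx hxθ w hw
  obtain ⟨φ, hφV, hφθ, hφb⟩ := hφ R r V θ hR hrR htop hV hθ hθV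
  obtain ⟨u, hu, z, hz, rfl⟩ := Submodule.mem_sup.1 hw
  obtain ⟨t, rfl⟩ := Submodule.mem_span_singleton.1 hz
  have hR0 : 0 ≤ R := by linarith
  have hRd : 1 ≤ R ^ d := one_le_pow₀ hR
  set w := u + t • θ with hwdef
  have ht : |t| * R ≤ C * R ^ d * ‖w‖ := by
    have h1 : φ w = t * φ θ := by simp [hwdef, hφV u hu]
    have h2 : |t| ≤ |φ w| := by
      rw [h1, abs_mul]
      exact le_mul_of_one_le_right (abs_nonneg t) hφθ
    exact (mul_le_mul_of_nonneg_right h2 hR0).trans (hφb w)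
  have htθ : |t| * ‖θ‖ ≤ C * R ^ d * ‖w‖ :=
    (mul_le_mul_of_nonneg_left (hθ.2.trans hrR) (abs_nonneg t)).trans ht
  have hunorm : ‖u‖ ≤ ‖w‖ + |t| * ‖θ‖ := by
    have h1 : u = w - t • θ := by simp [hwdef]
    calc ‖u‖ = ‖w - t • θ‖ := by rw [← h1]
      _ ≤ ‖w‖ + ‖t • θ‖ := norm_sub_le _ _
      _ = ‖w‖ + |t| * ‖θ‖ := by rw [norm_smul, Real.norm_eq_abs]
  have hinner : |⟪x, w⟫| ≤ |⟪x, u⟫| + |t| * |⟪x, θ⟫| := by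
    rw [hwdef, inner_add_right, real_inner_smul_right, ← abs_mul]
    exact abs_add_le _ _
  have h1 : |t| * |⟪x, θ⟫| ≤ M * (|t| * ‖θ‖) :=
    (mul_le_mul_of_nonneg_left hxθ (abs_nonneg t)).trans_eq (by ring)
  have h2 : |⟪x, w⟫| ≤ M * (‖w‖ + 2 * (|t| * ‖θ‖)) := by
    have := mul_le_mul_of_nonneg_left hunorm hM
    have := hx u hu
    linarith
  have h3 : ‖w‖ ≤ R ^ d * ‖w‖ := le_mul_of_one_le_left (norm_nonneg w) hRd
  calc |⟪x, w⟫| ≤ M * (‖w‖ + 2 * (|t| * ‖θ‖)) := h2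
    _ ≤ M * (R ^ d * ‖w‖ + 2 * (C * R ^ d * ‖w‖)) :=
        mul_le_mul_of_nonneg_left (by linarith) hM
    _ = (1 + 2 * C) * R ^ d * M * ‖w‖ := by ring

lemma mem_upsTheta_symm {ρ a : ℝ} {θ ξ η : EuclideanSpace ℝ (Fin d)}
    (h : η ∈ upsTheta ρ a θ ξ) : ξ ∈ upsTheta ρ a θ η := by
  obtain ⟨h1, h2, l, hl⟩ := h
  refine ⟨h2, h1, -l, ?_⟩
  rw [← neg_sub, hl]
  simp

lemma mem_Ups_symm {B : Basis (Fin d) ℝ (EuclideanSpace ℝ (Fin d))} {ρ a r : ℝ}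
    {ξ η : EuclideanSpace ℝ (Fin d)} (h : η ∈ Ups B ρ a r ξ) : ξ ∈ Ups B ρ a r η := by
  have : Std.Symm (resStep B ρ a r) :=
    ⟨fun _ _ ⟨θ, hθ, hs⟩ => ⟨θ, hθ, mem_upsTheta_symm hs⟩⟩
  exact Relation.ReflTransGen.stdSymm.symm _ _ h

lemma mem_Xi2_of_mem_Ups {B : Basis (Fin d) ℝ (EuclideanSpace ℝ (Fin d))} {ρ r : ℝ} {α : ℕ → ℝ}
    {V : Submodule ℝ (EuclideanSpace ℝ (Fin d))} {ξ η : EuclideanSpace ℝ (Fin d)}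
    (hξ : ξ ∈ Xi2 B ρ r α V) (h : η ∈ Ups B ρ (α 1) r ξ) : η ∈ Xi2 B ρ r α V := by
  obtain ⟨ζ, hζ, hζξ⟩ := hξ
  exact ⟨ζ, hζ, Relation.ReflTransGen.trans hζξ h⟩

/-- A chain of resonant congruences through nonzero vectors of `Θ_r⁰` spanning `U`. -/
inductive ResChain (B : Basis (Fin d) ℝ (EuclideanSpace ℝ (Fin d))) (ρ a r : ℝ) :
    Submodule ℝ (EuclideanSpace ℝ (Fin d)) → EuclideanSpace ℝ (Fin d) →
      EuclideanSpace ℝ (Fin d) → Prop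
  | refl (x : EuclideanSpace ℝ (Fin d)) : ResChain B ρ a r ⊥ x x
  | tail {U : Submodule ℝ (EuclideanSpace ℝ (Fin d))} {x y z θ : EuclideanSpace ℝ (Fin d)} :
      ResChain B ρ a r U x y → θ ∈ Theta0 B r → θ ≠ 0 → z ∈ upsTheta ρ a θ y →
      ResChain B ρ a r (U ⊔ Submodule.span ℝ {θ}) x z

lemma ResChain.head {B : Basis (Fin d) ℝ (EuclideanSpace ℝ (Fin d))} {ρ a r : ℝ}
    {U : Submodule ℝ (EuclideanSpace ℝ (Fin d))} {x y z θ : EuclideanSpace ℝ (Fin d)}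
    (h : ResChain B ρ a r U y z) (hθ : θ ∈ Theta0 B r) (hθ0 : θ ≠ 0)
    (hs : y ∈ upsTheta ρ a θ x) : ResChain B ρ a r (U ⊔ Submodule.span ℝ {θ}) x z := by
  induction h with
  | refl y => exact (ResChain.refl x).tail hθ hθ0 hs
  | tail _ hτ hτ0 hstep ih =>
    rw [sup_right_comm]
    exact (ih hs).tail hτ hτ0 hstep

lemma ResChain.symm {B : Basis (Fin d) ℝ (EuclideanSpace ℝ (Fin d))} {ρ a r : ℝ}
    {U : Submodule ℝ (EuclideanSpace ℝ (Fin d))} {x y : EuclideanSpace ℝ (Fin d)}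
    (h : ResChain B ρ a r U x y) : ResChain B ρ a r U y x := by
  induction h with
  | refl y => exact ResChain.refl y
  | tail _ hτ hτ0 hstep ih => exact ih.head hτ hτ0 (mem_upsTheta_symm hstep)

lemma IsLatticeSubspace.bot (B : Basis (Fin d) ℝ (EuclideanSpace ℝ (Fin d))) (r : ℝ) :
    IsLatticeSubspace B r ⊥ :=
  ⟨∅, Set.empty_subset _, Submodule.span_empty.symm⟩

lemma IsLatticeSubspace.sup_span {B : Basis (Fin d) ℝ (EuclideanSpace ℝ (Fin d))} {r : ℝ}
    {V : Submodule ℝ (EuclideanSpace ℝ (Fin d))} (hV : IsLatticeSubspace B r V)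
    {θ : EuclideanSpace ℝ (Fin d)} (hθ : θ ∈ Theta0 B r) :
    IsLatticeSubspace B r (V ⊔ Submodule.span ℝ {θ}) := by
  obtain ⟨S, hS, rfl⟩ := hV
  exact ⟨S ∪ {θ}, Set.union_subset hS (Set.singleton_subset_iff.2 hθ),
    (Submodule.span_union S {θ}).symm⟩

lemma ResChain.isLatticeSubspace {B : Basis (Fin d) ℝ (EuclideanSpace ℝ (Fin d))} {ρ a r : ℝ}
    {U : Submodule ℝ (EuclideanSpace ℝ (Fin d))} {x y : EuclideanSpace ℝ (Fin d)}
    (h : ResChain B ρ a r U x y) : IsLatticeSubspace B r U := by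
  induction h with
  | refl => exact IsLatticeSubspace.bot B r
  | tail _ hτ _ _ ih => exact ih.sup_span hτ

lemma ResChain.sub_mem {B : Basis (Fin d) ℝ (EuclideanSpace ℝ (Fin d))} {ρ a r : ℝ}
    {U : Submodule ℝ (EuclideanSpace ℝ (Fin d))} {x y : EuclideanSpace ℝ (Fin d)}
    (h : ResChain B ρ a r U x y) : y - x ∈ U := by
  induction h with
  | refl x => simp
  | @tail U x y z θ _ _ _ hstep ih =>
    obtain ⟨-, -, l, hl⟩ := hstep
    have h1 : z - x = (y - x) + (-(l : ℝ)) • θ := by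
      rw [neg_smul, ← hl]
      abel
    rw [h1]
    exact Submodule.add_mem_sup ih
      (Submodule.smul_mem _ _ (Submodule.mem_span_singleton_self θ))

/-- A nontrivial chain has an initial piece spanning a subspace of codimension one, at the end of
which the missing direction is resonant. -/
lemma ResChain.exists_initial {B : Basis (Fin d) ℝ (EuclideanSpace ℝ (Fin d))} {ρ a r : ℝ}
    {U : Submodule ℝ (EuclideanSpace ℝ (Fin d))} {x z : EuclideanSpace ℝ (Fin d)}
    (h : ResChain B ρ a r U x z) (hU : U ≠ ⊥) :
    ∃ U' y θ, ResChain B ρ a r U' x y ∧ θ ∈ Theta0 B r ∧ θ ∉ U' ∧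
      |⟪y, θ⟫| ≤ ρ ^ a * ‖θ‖ ∧ U = U' ⊔ Submodule.span ℝ {θ} := by
  induction h with
  | refl => exact absurd rfl hU
  | @tail U x y z θ hch hθ hθ0 hstep ih =>
    by_cases hmem : θ ∈ U
    · have hsup : U ⊔ Submodule.span ℝ {θ} = U :=
        sup_eq_left.2 ((Submodule.span_singleton_le_iff_mem _ _).2 hmem)
      rw [hsup] at hU ⊢
      exact ih hU
    · exact ⟨U, y, θ, hch, hθ, hmem, (hstep.1.resolve_left hθ0).le, rfl⟩

/-- The starting point of a chain spanning `U` has a small projection onto `U`. -/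
lemma ResChain.projBound {B : Basis (Fin d) ℝ (EuclideanSpace ℝ (Fin d))} {ρ a r G : ℝ}
    (hG : 1 ≤ G) (hρ : 0 ≤ ρ ^ a)
    (hsup : ∀ (V : Submodule ℝ (EuclideanSpace ℝ (Fin d))) (θ x : EuclideanSpace ℝ (Fin d))
      (M : ℝ), IsLatticeSubspace B r V → θ ∈ Theta0 B r → θ ∉ V → 0 ≤ M →
      ProjBound V x M → |⟪x, θ⟫| ≤ M * ‖θ‖ →
      ProjBound (V ⊔ Submodule.span ℝ {θ}) x (G * M))
    (n : ℕ) {U : Submodule ℝ (EuclideanSpace ℝ (Fin d))} {x z : EuclideanSpace ℝ (Fin d)}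
    (h : ResChain B ρ a r U x z) (hn : finrank ℝ U = n) :
    ProjBound U x ((G + 2) ^ n * ρ ^ a) := by
  induction n generalizing U x z with
  | zero =>
    rw [Submodule.finrank_eq_zero] at hn
    subst hn
    intro u hu
    rw [(Submodule.mem_bot ℝ).1 hu]
    simp
  | succ n ih =>
    have hU : U ≠ ⊥ := by
      rintro rfl
      simp at hn
    obtain ⟨U', y, θ, hch, hθ, hθU, hyθ, rfl⟩ := h.exists_initial hU
    rw [Submodule.finrank_sup_span_singleton hθU] at hn
    have hn' : finrank ℝ U' = n := by omega
    set M := (G + 2) ^ n * ρ ^ a with hMdef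
    have hpow : 1 ≤ (G + 2) ^ n := one_le_pow₀ (by linarith)
    have hM : 0 ≤ M := by positivity
    have hρM : ρ ^ a ≤ M := le_mul_of_one_le_left hρ hpow
    have hx := ih hch hn'
    have hy := ih hch.symm hn'
    have hyU := hsup U' θ y M hch.isLatticeSubspace hθ hθU hM hy
      (hyθ.trans (mul_le_mul_of_nonneg_right hρM (norm_nonneg θ)))
    have hxy : ‖x - y‖ ≤ 2 * M := hy.norm_sub_le hx hM hch.symm.sub_mem
    refine (hyU.of_norm_sub_le hxy).mono le_rfl (le_of_eq ?_)
    rw [pow_succ, hMdef]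
    ring

lemma exponent_one_le {κ : ℝ} {α : ℕ → ℝ} (hκ : 0 < κ)
    (hα : ∀ n < d, α n + 2 * κ * (d : ℝ) ^ 2 < α (n + 1)) {n : ℕ} (hn : 1 ≤ n) (hnd : n ≤ d) :
    α 1 ≤ α n := by
  induction n, hn using Nat.le_induction with
  | base => exact le_rfl
  | succ n hn ih =>
    have h1 := hα n (by omega)
    have h2 : 0 ≤ 2 * κ * (d : ℝ) ^ 2 := by positivity
    linarith [ih (by omega)]

/-- For large `ρ`, a point reached from `Ξ₁(V)` by a chain inside `V` and nearly orthogonal to some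
`θ ∈ Θ_r⁰` outside `V` lies in `Ξ₁(V + ℝθ)`. -/
lemma exists_forall_mem_Xi1_sup_span (B : Basis (Fin d) ℝ (EuclideanSpace ℝ (Fin d))) (hd : 2 ≤ d)
    (κ : ℝ) (α : ℕ → ℝ) :
    ∃ ρ₀ : ℝ, ∀ ρ r : ℝ, ρ₀ ≤ ρ → GoodParams B ρ r κ α →
      ∀ (V U : Submodule ℝ (EuclideanSpace ℝ (Fin d))) (ξ η θ : EuclideanSpace ℝ (Fin d)),
        IsLatticeSubspace B r V → 1 ≤ finrank ℝ V → ξ ∈ Xi1 ρ α V →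
        ResChain B ρ (α 1) r U ξ η → U ≤ V → θ ∈ Theta0 B r → θ ∉ V →
        |⟪η, θ⟫| ≤ ρ ^ α (finrank ℝ V) * ‖θ‖ →
        η ∈ Xi1 ρ α (V ⊔ Submodule.span ℝ {θ}) := by
  by_cases hκ : 0 < κ
  swap
  · exact ⟨0, fun ρ r _ h => absurd h.2.1 hκ⟩
  obtain ⟨D, hD, hsup⟩ := exists_projBound_sup_span B
  have hκd : 0 < κ * (d : ℝ) ^ 2 := by positivity
  obtain ⟨ρ₀, hρ₀⟩ := Filter.eventually_atTop.1
    ((tendsto_rpow_atTop hκd).eventually_gt_atTop (3 * (D + 2) ^ d))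
  refine ⟨ρ₀, ?_⟩
  rintro ρ r hρ ⟨hρ1, -, -, hα, -, hr, htop⟩ V U ξ η θ hV hn1 hξ hch hUV hθ hθV hηθ
  have hρpos : 0 < ρ := by linarith
  set n := finrank ℝ V with hndef
  have hfin : finrank ℝ (V ⊔ Submodule.span ℝ {θ} : Submodule ℝ (EuclideanSpace ℝ (Fin d)))
      = n + 1 := Submodule.finrank_sup_span_singleton hθV
  have hnd : n + 1 ≤ d := by
    rw [← hfin]
    simpa using Submodule.finrank_le (V ⊔ Submodule.span ℝ {θ})
  set R := ρ ^ κ with hRdef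
  have hR : 1 ≤ R := Real.one_le_rpow hρ1 hκ.le
  have hRd : 1 ≤ R ^ d := one_le_pow₀ hR
  set G := D * R ^ d with hGdef
  have hG : 1 ≤ G := one_le_mul_of_one_le_of_one_le hD hRd
  have hsup' := hsup R r hR hr htop
  set P := ρ ^ α n with hPdef
  have hP : 0 < P := Real.rpow_pos_of_pos hρpos _
  have hρα : 0 < ρ ^ α 1 := Real.rpow_pos_of_pos hρpos _
  have h1P : ρ ^ α 1 ≤ P :=
    Real.rpow_le_rpow_of_exponent_le hρ1 (exponent_one_le hκ hα hn1 (by omega))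
  set M := (G + 2) ^ n * P with hMdef
  have hGn : 1 ≤ (G + 2) ^ n := one_le_pow₀ (by linarith)
  have hM : 0 < M := by positivity
  have hUn : finrank ℝ U ≤ n := Submodule.finrank_mono hUV
  have hMle : (G + 2) ^ finrank ℝ U * ρ ^ α 1 ≤ M :=
    mul_le_mul (pow_le_pow_right₀ (by linarith) hUn) h1P hρα.le (by positivity)
  have hξU := (hch.projBound hG hρα.le hsup' _ rfl).mono le_rfl hMle
  have hηU := (hch.symm.projBound hG hρα.le hsup' _ rfl).mono le_rfl hMle
  have hdist : ‖η - ξ‖ ≤ 2 * M := hξU.norm_sub_le hηU hM.le hch.sub_mem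
  have hξV : ProjBound V ξ P := (projBound_norm_projV V ξ).mono le_rfl (le_of_lt hξ)
  have hηV : ProjBound V η (3 * M) :=
    (hξV.of_norm_sub_le hdist).mono le_rfl (by
      have : P ≤ M := le_mul_of_one_le_left hP.le hGn
      linarith)
  have hηW := hsup' V θ η (3 * M) hV hθ hθV (by positivity) hηV
    (hηθ.trans (mul_le_mul_of_nonneg_right (by
      have : P ≤ M := le_mul_of_one_le_left hP.le hGn
      linarith) (norm_nonneg θ)))
  have hle := hηW.norm_projV_le (by positivity)
  change ‖projV _ η‖ < ρ ^ α (finrank ℝ _)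
  rw [hfin]
  refine hle.trans_lt ?_
  have hG2 : G + 2 ≤ (D + 2) * R ^ d := by
    rw [hGdef]
    linarith
  have hRpow : (R ^ d) ^ d = ρ ^ (κ * (d : ℝ) ^ 2) := by
    rw [← pow_mul, hRdef, ← Real.rpow_natCast, ← Real.rpow_mul hρpos.le]
    push_cast
    ring_nf
  calc G * (3 * M) ≤ (G + 2) * (3 * M) := mul_le_mul_of_nonneg_right (by linarith) (by positivity)
    _ = 3 * (G + 2) ^ (n + 1) * P := by rw [hMdef]; ring
    _ ≤ 3 * (G + 2) ^ d * P := by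
        gcongr
        linarith
    _ ≤ 3 * ((D + 2) * R ^ d) ^ d * P := by gcongr
    _ = 3 * (D + 2) ^ d * ρ ^ (κ * (d : ℝ) ^ 2) * P := by rw [mul_pow, hRpow]; ring
    _ < ρ ^ (κ * (d : ℝ) ^ 2) * ρ ^ (κ * (d : ℝ) ^ 2) * P := by
        have := hρ₀ ρ hρ
        gcongr
    _ = ρ ^ (α n + 2 * κ * (d : ℝ) ^ 2) := by
        rw [hPdef, ← Real.rpow_add hρpos, ← Real.rpow_add hρpos]
        ring_nf
    _ ≤ ρ ^ α (n + 1) := Real.rpow_le_rpow_of_exponent_le hρ1 (hα n (by omega)).le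

/-- A point of the resonant layer of `θ ≠ 0` lies in `Ξ₁(ℝθ)`. -/
lemma mem_Xi1_span_singleton {ρ : ℝ} {α : ℕ → ℝ} (hρ : 0 < ρ) {η θ : EuclideanSpace ℝ (Fin d)}
    (hθ : θ ≠ 0) (h : η ∈ layer ρ (α 1) θ) : η ∈ Xi1 ρ α (Submodule.span ℝ {θ}) := by
  have hlt := h.resolve_left hθ
  change ‖projV _ η‖ < ρ ^ α (finrank ℝ _)
  rw [finrank_span_singleton hθ]
  set p := projV (Submodule.span ℝ {θ}) η with hp
  have hpos : 0 < ρ ^ α 1 := Real.rpow_pos_of_pos hρ _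
  rcases (norm_nonneg p).eq_or_lt with h0 | h0
  · rwa [← h0]
  have hmem : p ∈ Submodule.span ℝ {θ} := projV_mem _ η
  obtain ⟨t, ht⟩ := Submodule.mem_span_singleton.1 hmem
  have h1 : ‖p‖ * ‖p‖ = t * ⟪η, θ⟫ := by
    rw [← real_inner_self_eq_norm_mul_norm, inner_projV _ η hmem, ← ht, real_inner_smul_right]
  have h2 : ‖p‖ = |t| * ‖θ‖ := by rw [← ht, norm_smul, Real.norm_eq_abs]
  have ht0 : 0 < |t| := by
    rw [h2] at h0
    exact pos_of_mul_pos_left h0 (norm_nonneg θ)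
  have h3 : ‖p‖ * ‖p‖ < ρ ^ α 1 * ‖p‖ := by
    calc ‖p‖ * ‖p‖ ≤ |t| * |⟪η, θ⟫| := by rw [h1, ← abs_mul]; exact le_abs_self _
      _ < |t| * (ρ ^ α 1 * ‖θ‖) := mul_lt_mul_of_pos_left hlt ht0
      _ = ρ ^ α 1 * ‖p‖ := by rw [h2]; ring
  exact lt_of_mul_lt_mul_right h3 h0.le

lemma mem_Xi2_bot (B : Basis (Fin d) ℝ (EuclideanSpace ℝ (Fin d))) {ρ r : ℝ} {α : ℕ → ℝ}
    (hα : α 0 = 0) (ξ : EuclideanSpace ℝ (Fin d)) : ξ ∈ Xi2 B ρ r α ⊥ := by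
  refine ⟨ξ, ?_, Relation.ReflTransGen.refl⟩
  have h : projV ⊥ ξ = 0 := (Submodule.mem_bot ℝ).1 (projV_mem ⊥ ξ)
  change ‖projV ⊥ ξ‖ < ρ ^ α (finrank ℝ _)
  rw [h, finrank_bot, hα]
  simp

lemma exists_mem_Xi (B : Basis (Fin d) ℝ (EuclideanSpace ℝ (Fin d))) {ρ r : ℝ} {α : ℕ → ℝ}
    (hα : α 0 = 0) (ξ : EuclideanSpace ℝ (Fin d)) :
    ∃ V, IsLatticeSubspace B r V ∧ ξ ∈ Xi B ρ r α V := by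
  let s : Set (Submodule ℝ (EuclideanSpace ℝ (Fin d))) :=
    {V | IsLatticeSubspace B r V ∧ ξ ∈ Xi2 B ρ r α V}
  have hs : (⊥ : Submodule ℝ (EuclideanSpace ℝ (Fin d))) ∈ s :=
    ⟨IsLatticeSubspace.bot B r, mem_Xi2_bot B hα ξ⟩
  have hbdd : BddAbove ((fun V : Submodule ℝ (EuclideanSpace ℝ (Fin d)) => finrank ℝ V) '' s) :=
    ⟨finrank ℝ (EuclideanSpace ℝ (Fin d)), by
      rintro _ ⟨V, -, rfl⟩
      exact Submodule.finrank_le V⟩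
  obtain ⟨V, hV, hmax⟩ := Nat.sSup_mem (Set.Nonempty.image _ ⟨⊥, hs⟩) hbdd
  refine ⟨V, hV.1, hV.2, ?_⟩
  simp only [Set.mem_iUnion, not_exists]
  rintro W ⟨hW, hlt⟩ hξW
  have hle : finrank ℝ W ≤ _ := le_csSup hbdd ⟨W, ⟨hW, hξW⟩, rfl⟩
  exact hlt.not_ge (hle.trans_eq hmax.symm)

lemma notMem_Xi2_of_mem_Xi {B : Basis (Fin d) ℝ (EuclideanSpace ℝ (Fin d))} {ρ r : ℝ} {α : ℕ → ℝ}
    {V W : Submodule ℝ (EuclideanSpace ℝ (Fin d))} {ξ : EuclideanSpace ℝ (Fin d)}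
    (hξ : ξ ∈ Xi B ρ r α V) (hW : IsLatticeSubspace B r W) (hVW : finrank ℝ V < finrank ℝ W) :
    ξ ∉ Xi2 B ρ r α W := fun h =>
  hξ.2 (Set.mem_biUnion (Set.mem_ofPred.2 ⟨hW, hVW⟩) h)

lemma Ups_subset_Xi {B : Basis (Fin d) ℝ (EuclideanSpace ℝ (Fin d))} {ρ r : ℝ} {α : ℕ → ℝ}
    {V : Submodule ℝ (EuclideanSpace ℝ (Fin d))} {ξ : EuclideanSpace ℝ (Fin d)}
    (hξ : ξ ∈ Xi B ρ r α V) : Ups B ρ (α 1) r ξ ⊆ Xi B ρ r α V := by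
  intro η hη
  refine ⟨mem_Xi2_of_mem_Ups hξ.1 hη, ?_⟩
  simp only [Set.mem_iUnion, not_exists]
  rintro W ⟨hW, hlt⟩ hηW
  exact notMem_Xi2_of_mem_Xi hξ hW hlt (mem_Xi2_of_mem_Ups hηW (mem_Ups_symm hη))

/-- Theorem 5.18: for sufficiently large ρ, the sets Ξ(V) (V running over
all lattice r-subspaces) cover ℝ^d, are pairwise disjoint, and satisfy Υ(ξ) ⊆ Ξ(V) and
N(ξ) ⊆ V for every ξ ∈ Ξ(V). -/
theorem Xi_partition
    (d : ℕ) (hd : 2 ≤ d) (B : Basis (Fin d) ℝ (EuclideanSpace ℝ (Fin d)))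
    (κ : ℝ) (α : ℕ → ℝ) :
    ∃ ρ₀ : ℝ, ∀ ρ r : ℝ, ρ₀ ≤ ρ → GoodParams B ρ r κ α →
      (∀ ξ : EuclideanSpace ℝ (Fin d),
        ∃ V : Submodule ℝ (EuclideanSpace ℝ (Fin d)),
          IsLatticeSubspace B r V ∧ ξ ∈ Xi B ρ r α V) ∧
      (∀ V₁ V₂ : Submodule ℝ (EuclideanSpace ℝ (Fin d)),
        IsLatticeSubspace B r V₁ → IsLatticeSubspace B r V₂ → V₁ ≠ V₂ →
        Xi B ρ r α V₁ ∩ Xi B ρ r α V₂ = ∅) ∧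
      (∀ V : Submodule ℝ (EuclideanSpace ℝ (Fin d)), IsLatticeSubspace B r V →
        ∀ ξ ∈ Xi B ρ r α V,
          Ups B ρ (α 1) r ξ ⊆ Xi B ρ r α V ∧
          resN B ρ (α 1) r ξ ⊆ (V : Set (EuclideanSpace ℝ (Fin d)))) := by
  obtain ⟨ρ₀, hρ₀⟩ := exists_forall_mem_Xi1_sup_span B hd κ α
  refine ⟨ρ₀, fun ρ r hρ hgood => ?_⟩
  have hXi1 := hρ₀ ρ r hρ hgood
  obtain ⟨hρ1, hκ, hα0, hα, -, -, -⟩ := hgood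
  have hρpos : 0 < ρ := by linarith
  -- Chains starting in `Ξ₁(V) ∩ Ξ(V)` only use directions from `V`.
  have hchain : ∀ V : Submodule ℝ (EuclideanSpace ℝ (Fin d)), IsLatticeSubspace B r V →
      ∀ ξ ∈ Xi B ρ r α V, ξ ∈ Xi1 ρ α V → ∀ η ∈ Ups B ρ (α 1) r ξ,
        ∃ U ≤ V, ResChain B ρ (α 1) r U ξ η := by
    intro V hV ξ hξ hξ1 η hη
    induction hη with
    | refl => exact ⟨⊥, bot_le, ResChain.refl ξ⟩
    | @tail η η' hη hstep ih =>
      obtain ⟨U, hUV, hch⟩ := ih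
      obtain ⟨θ, hθ, hη'⟩ := hstep
      rcases eq_or_ne θ 0 with rfl | hθ0
      · obtain ⟨-, -, l, hl⟩ := hη'
        rw [smul_zero, sub_eq_zero] at hl
        exact hl ▸ ⟨U, hUV, hch⟩
      by_cases hθV : θ ∈ V
      · exact ⟨_, sup_le hUV ((Submodule.span_singleton_le_iff_mem _ _).2 hθV),
          hch.tail hθ hθ0 hη'⟩
      exfalso
      have hmem : η ∈ Xi1 ρ α (V ⊔ Submodule.span ℝ {θ}) := by
        rcases Nat.eq_zero_or_pos (finrank ℝ V) with h0 | h0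
        · rw [Submodule.finrank_eq_zero.1 h0, bot_sup_eq]
          exact mem_Xi1_span_singleton hρpos hθ0 hη'.1
        · refine hXi1 V U ξ η θ hV h0 hξ1 hch hUV hθ hθV
            ((hη'.1.resolve_left hθ0).le.trans ?_)
          exact mul_le_mul_of_nonneg_right (Real.rpow_le_rpow_of_exponent_le hρ1
            (exponent_one_le hκ hα h0 (by simpa using Submodule.finrank_le V))) (norm_nonneg θ)
      refine notMem_Xi2_of_mem_Xi hξ (hV.sup_span hθ) ?_ ⟨η, hmem, mem_Ups_symm hη⟩
      rw [Submodule.finrank_sup_span_singleton hθV]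
      exact Nat.lt_succ_self _
  refine ⟨exists_mem_Xi B hα0, ?_, ?_⟩
  · intro V₁ V₂ hV₁ hV₂ hne
    refine Set.eq_empty_iff_forall_notMem.2 ?_
    rintro ξ ⟨h₁, h₂⟩
    rcases lt_trichotomy (finrank ℝ V₁) (finrank ℝ V₂) with hlt | heq | hlt
    · exact notMem_Xi2_of_mem_Xi h₁ hV₂ hlt h₂.1
    · obtain ⟨ξ₁, hξ₁, hξ₁ξ⟩ := h₁.1
      obtain ⟨ξ₂, hξ₂, hξ₂ξ⟩ := h₂.1
      have hξ₁V : ξ₁ ∈ Xi B ρ r α V₁ := Ups_subset_Xi h₁ (mem_Ups_symm hξ₁ξ)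
      have hξ₁₂ : ξ₂ ∈ Ups B ρ (α 1) r ξ₁ :=
        Relation.ReflTransGen.trans hξ₁ξ (mem_Ups_symm hξ₂ξ)
      obtain ⟨U, hU, hch⟩ := hchain V₁ hV₁ ξ₁ hξ₁V hξ₁ ξ₂ hξ₁₂
      have hnle : ¬ V₂ ≤ V₁ := fun h => hne (Submodule.eq_of_le_of_finrank_eq h heq.symm).symm
      obtain ⟨S, hS, hV₂S⟩ := id hV₂
      obtain ⟨θ, hθS, hθV₁⟩ : ∃ θ ∈ S, θ ∉ V₁ := by
        by_contra! h
        exact hnle (hV₂S ▸ Submodule.span_le.2 h)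
      have hθV₂ : θ ∈ V₂ := hV₂S ▸ Submodule.subset_span hθS
      have hpos : 1 ≤ finrank ℝ V₁ := by
        rw [heq, Nat.one_le_iff_ne_zero]
        intro h
        exact hnle (Submodule.finrank_eq_zero.1 h ▸ bot_le)
      have hinner : |⟪ξ₂, θ⟫| ≤ ρ ^ α (finrank ℝ V₁) * ‖θ‖ := by
        rw [heq]
        exact ((projBound_norm_projV V₂ ξ₂).mono le_rfl (le_of_lt hξ₂)) θ hθV₂
      have hmem := hXi1 V₁ U ξ₁ ξ₂ θ hV₁ hpos hξ₁ hch hU (hS hθS) hθV₁ hinner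
      refine notMem_Xi2_of_mem_Xi h₁ (hV₁.sup_span (hS hθS)) ?_ ⟨ξ₂, hmem, hξ₂ξ⟩
      rw [Submodule.finrank_sup_span_singleton hθV₁]
      exact Nat.lt_succ_self _
    · exact notMem_Xi2_of_mem_Xi h₂ hV₁ hlt h₁.1
  · intro V hV ξ hξ
    refine ⟨Ups_subset_Xi hξ, fun m hm => ?_⟩
    obtain ⟨ζ, hζ, hζξ⟩ := hξ.1
    have hζV := Ups_subset_Xi hξ (mem_Ups_symm hζξ)
    have hsub : ∀ η ∈ Ups B ρ (α 1) r ζ, η - ζ ∈ V := by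
      intro η hη
      obtain ⟨U, hU, hch⟩ := hchain V hV ζ hζV hζ η hη
      exact hU hch.sub_mem
    have h := V.sub_mem (hsub _ (Relation.ReflTransGen.trans hζξ hm)) (hsub _ hζξ)
    simpa using h
end
end

section
/- For sufficiently large ρ the following holds: if V ∈ 𝒱(r,n) with n ≤ d, ξ ∈ Ξ(V), and ν = ξ_{V^⊥} is the orthogonal projection of ξ onto V^⊥, then N(ξ + tν) = N(ξ) for all t ≥ 0; in particular N(ξ + tν) ⊆ V. -/
noncomputable section

open Set Submodule Module MeasureTheory Relation
open scoped RealInnerProductSpace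

variable {d : ℕ}

section Projection

variable (V : Submodule ℝ (EuclideanSpace ℝ (Fin d))) (ξ : EuclideanSpace ℝ (Fin d))

lemma projV_eq_starProjection : projV V ξ = V.starProjection ξ := rfl

lemma projV_mem_s14 : projV V ξ ∈ V := V.starProjection_apply_mem ξ

variable {V ξ}

lemma inner_projV_of_mem {v : EuclideanSpace ℝ (Fin d)} (hv : v ∈ V) :
    ⟪projV V ξ, v⟫ = ⟪ξ, v⟫ := by
  have h := V.starProjection_inner_eq_zero ξ v hv
  rw [inner_sub_left, sub_eq_zero] at h
  exact h.symm

lemma projV_of_mem (hξ : ξ ∈ V) : projV V ξ = ξ :=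
  Submodule.starProjection_eq_self_iff.2 hξ

lemma projV_add (x y : EuclideanSpace ℝ (Fin d)) :
    projV V (x + y) = projV V x + projV V y := by
  simp only [projV_eq_starProjection, map_add]

lemma projV_smul (c : ℝ) (x : EuclideanSpace ℝ (Fin d)) :
    projV V (c • x) = c • projV V x := by
  simp only [projV_eq_starProjection, map_smul]

lemma projV_sub (x y : EuclideanSpace ℝ (Fin d)) :
    projV V (x - y) = projV V x - projV V y := by
  simp only [projV_eq_starProjection, map_sub]

lemma norm_projV_le : ‖projV V ξ‖ ≤ ‖ξ‖ := by
  exact V.norm_orthogonalProjectionOnto_apply_le ξ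

lemma inner_sub_projV_of_mem {v : EuclideanSpace ℝ (Fin d)} (hv : v ∈ V) :
    ⟪ξ - projV V ξ, v⟫ = 0 :=
  V.starProjection_inner_eq_zero ξ v hv

lemma norm_projV_sq : ‖projV V ξ‖ ^ 2 = ⟪projV V ξ, ξ⟫ := by
  rw [real_inner_comm, ← inner_projV_of_mem (projV_mem_s14 V ξ), real_inner_self_eq_norm_sq]

/-- Points with `ξ - η ∈ V` have the same component orthogonal to `V`. -/
lemma sub_projV_eq_of_sub_mem {η : EuclideanSpace ℝ (Fin d)} (h : ξ - η ∈ V) :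
    ξ - projV V ξ = η - projV V η := by
  have h' := projV_of_mem h
  rw [projV_sub] at h'
  rw [sub_eq_sub_iff_sub_eq_sub, h']

/-- Moving away from `V` along `V^⊥` does not decrease the projection to a larger subspace. -/
lemma norm_projV_le_norm_projV_add_smul {W : Submodule ℝ (EuclideanSpace ℝ (Fin d))}
    (hVW : V ≤ W) {t : ℝ} (ht : 0 ≤ t) :
    ‖projV W ξ‖ ≤ ‖projV W (ξ + t • (ξ - projV V ξ))‖ := by
  set p := projV V ξ with hp
  set q := projV W (ξ - p) with hq
  have hpV : p ∈ V := projV_mem_s14 V ξ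
  have hpW : projV W p = p := projV_of_mem (hVW hpV)
  have hξ : projV W ξ = p + q := by rw [hq, projV_sub, hpW]; abel
  have hpq : ⟪p, q⟫ = 0 := by
    rw [real_inner_comm, hq, inner_projV_of_mem (hVW hpV)]
    exact inner_sub_projV_of_mem hpV
  have hexp (c : ℝ) : ‖p + c • q‖ ^ 2 = ‖p‖ ^ 2 + c ^ 2 * ‖q‖ ^ 2 := by
    rw [norm_add_sq_real, inner_smul_right, hpq, norm_smul, mul_pow, Real.norm_eq_abs, sq_abs]
    ring
  have hξt : projV W (ξ + t • (ξ - p)) = p + (1 + t) • q := by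
    rw [projV_add, projV_smul, hξ, ← hq, add_smul, one_smul, add_assoc]
  rw [hξt, hξ]
  refine le_of_sq_le_sq ?_ (norm_nonneg _)
  have h1 := hexp 1
  rw [one_smul] at h1
  rw [h1, hexp]
  nlinarith [mul_nonneg ht (sq_nonneg ‖q‖), mul_nonneg (mul_nonneg ht ht) (sq_nonneg ‖q‖)]

end Projection

section LatticeGeometry

/-- Coordinates in a basis of short dual lattice vectors are controlled by the norm. -/
lemma exists_repr_le_of_basis_mem_Theta0
    (B : Basis (Fin d) ℝ (EuclideanSpace ℝ (Fin d))) :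
    ∃ C : ℝ, 1 ≤ C ∧ ∀ r R : ℝ, r ≤ R → 1 ≤ R →
      ∀ e : Basis (Fin d) ℝ (EuclideanSpace ℝ (Fin d)), (∀ i, e i ∈ Theta0 B r) →
      ∀ w i, |e.repr w i| ≤ C * R ^ d * ‖w‖ := by
  set L : ℝ := 1 + ∑ j, ‖B j‖ with hL
  have hBL (j : Fin d) : ‖B j‖ ≤ L := by
    have := Finset.single_le_sum (f := fun j => ‖B j‖) (fun j _ => norm_nonneg _)
      (Finset.mem_univ j)
    linarith
  have hL1 : 1 ≤ L := by
    have : 0 ≤ ∑ j, ‖B j‖ := Finset.sum_nonneg fun j _ => norm_nonneg _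
    linarith
  have hpi : 1 ≤ 2 * Real.pi := by linarith [Real.pi_gt_three]
  set C₀ : ℝ := d * (L * ((d.factorial : ℝ) * L ^ d)) with hC₀
  have hC₀0 : 0 ≤ C₀ := by positivity
  refine ⟨1 + C₀, by linarith, fun r R hrR hR e he w i => ?_⟩
  have hk (i j : Fin d) : ∃ k : ℤ, ⟪e i, B j⟫ = 2 * Real.pi * k :=
    (he i).1 _ (Submodule.subset_span ⟨j, rfl⟩)
  choose k hk using hk
  set M : Matrix (Fin d) (Fin d) ℤ := Matrix.of k with hM
  set A : Matrix (Fin d) (Fin d) ℝ := M.map (Int.cast : ℤ → ℝ) with hA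
  have hAij (i j : Fin d) : 2 * Real.pi * A i j = ⟪e i, B j⟫ := by
    simp [hA, hM, hk]
  have hvec (c : Fin d → ℝ) (j : Fin d) :
      2 * Real.pi * (Matrix.vecMul c A) j = ⟪∑ i, c i • e i, B j⟫ := by
    rw [sum_inner, Matrix.vecMul, dotProduct, Finset.mul_sum]
    refine Finset.sum_congr rfl fun i _ => ?_
    rw [inner_smul_left, ← hAij]
    simp only [conj_trivial]
    ring
  have hdet : A.det = ((M.det : ℤ) : ℝ) := by
    rw [hA]
    exact (Int.cast_det M).symm
  have hdet0 : A.det ≠ 0 := by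
    intro h0
    obtain ⟨v, hv, hv0⟩ := Matrix.exists_vecMul_eq_zero_iff.2 h0
    apply hv
    have hz : ∑ i, v i • e i = 0 := by
      refine InnerProductSpace.ext_inner_right_basis (𝕜 := ℝ) B fun j => ?_
      rw [← hvec, hv0]
      simp
    have := Fintype.linearIndependent_iff.1 e.linearIndependent v hz
    exact funext this
  have hdet1 : 1 ≤ |A.det| := by
    rw [hdet] at hdet0 ⊢
    have : M.det ≠ 0 := by exact_mod_cast hdet0
    exact_mod_cast Int.one_le_abs this
  have habs (x : EuclideanSpace ℝ (Fin d)) (j : Fin d) (y : ℝ)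
      (h : 2 * Real.pi * y = ⟪x, B j⟫) : |y| ≤ ‖x‖ * L := by
    have h1 : |⟪x, B j⟫| ≤ ‖x‖ * L :=
      (abs_real_inner_le_norm _ _).trans (by gcongr; exact hBL j)
    rw [← h, abs_mul, abs_of_nonneg (by linarith)] at h1
    nlinarith [abs_nonneg y]
  have hentry (i j : Fin d) : |A i j| ≤ L * R := by
    refine (habs _ _ _ (hAij i j)).trans ?_
    rw [mul_comm]
    gcongr
    exact (he i).2.trans hrR
  have hLR : 1 ≤ L * R := one_le_mul_of_one_le_of_one_le hL1 hR
  have hadj (i j : Fin d) : |A.adjugate i j| ≤ (d.factorial : ℝ) * (L * R) ^ d := by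
    rw [Matrix.adjugate_apply]
    have := Matrix.det_le (A := A.updateRow j (Pi.single i 1)) (abv := AbsoluteValue.abs)
      (x := L * R) (fun a b => by
        simp only [AbsoluteValue.abs_apply, Matrix.updateRow_apply]
        split_ifs with hab
        · rcases eq_or_ne b i with rfl | hbi
          · simpa using hLR
          · simp [hbi]; linarith
        · exact hentry a b)
    simpa using this
  set c : Fin d → ℝ := fun i => e.repr w i with hc
  set b : Fin d → ℝ := Matrix.vecMul c A with hb
  have hbj (j : Fin d) : |b j| ≤ ‖w‖ * L := by
    refine habs w j _ ?_
    rw [hb, hvec, hc, e.sum_repr]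
  have hcb : A.det • c = Matrix.vecMul b A.adjugate := by
    rw [hb, Matrix.vecMul_vecMul, Matrix.mul_adjugate, Matrix.vecMul_smul, Matrix.vecMul_one]
  have hci : A.det * c i = ∑ j, b j * A.adjugate j i := by
    have := congrFun hcb i
    simpa [Matrix.vecMul, dotProduct] using this
  calc |e.repr w i| = |c i| := rfl
    _ ≤ |A.det| * |c i| := le_mul_of_one_le_left (abs_nonneg _) hdet1
    _ = |∑ j, b j * A.adjugate j i| := by rw [← abs_mul, hci]
    _ ≤ ∑ j, |b j * A.adjugate j i| := Finset.abs_sum_le_sum_abs _ _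
    _ ≤ ∑ _j : Fin d, ‖w‖ * L * ((d.factorial : ℝ) * (L * R) ^ d) := by
        gcongr with j
        rw [abs_mul]
        gcongr
        · exact hbj j
        · exact hadj j i
    _ = C₀ * R ^ d * ‖w‖ := by
        rw [Finset.sum_const, Finset.card_univ, Fintype.card_fin, nsmul_eq_mul, hC₀, mul_pow]
        ring
    _ ≤ (1 + C₀) * R ^ d * ‖w‖ := by gcongr; linarith

/-- A vector almost orthogonal to dual lattice vectors of norm at most `r` has a small projection
onto their span. -/
lemma exists_norm_projV_span_le (B : Basis (Fin d) ℝ (EuclideanSpace ℝ (Fin d))) :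
    ∃ C : ℝ, 1 ≤ C ∧ ∀ r R : ℝ, r ≤ R → 1 ≤ R → Submodule.span ℝ (Theta0 B r) = ⊤ →
      ∀ S ⊆ Theta0 B r, ∀ (η : EuclideanSpace ℝ (Fin d)) (a : ℝ), 0 ≤ a →
        (∀ θ ∈ S, |⟪η, θ⟫| ≤ a * ‖θ‖) →
        ‖projV (Submodule.span ℝ S) η‖ ≤ C * R ^ (d + 1) * a := by
  obtain ⟨C, hC1, hC⟩ := exists_repr_le_of_basis_mem_Theta0 B
  refine ⟨1 + d * C, by nlinarith [show (0 : ℝ) ≤ d from Nat.cast_nonneg d], ?_⟩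
  intro r R hrR hR hspan S hS η a ha hη
  obtain ⟨s, hsS, hspans, hs⟩ := exists_linearIndependent ℝ S
  obtain ⟨b, hbΘ, hsb, hΘb, hb⟩ :=
    exists_linearIndepOn_id_extension (K := ℝ) (s := s) (t := Theta0 B r) hs (hsS.trans hS)
  have hbtop : ⊤ ≤ Submodule.span ℝ (Set.range (fun x : b => (x : EuclideanSpace ℝ (Fin d)))) := by
    rw [Subtype.range_coe, ← hspan]
    exact Submodule.span_le.2 hΘb
  let e₀ : Basis b ℝ (EuclideanSpace ℝ (Fin d)) := Basis.mk hb hbtop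
  let e := e₀.reindex (e₀.indexEquiv B)
  have he₀ (x : b) : e₀ x = x := by simp [e₀]
  have he (i : Fin d) : e i ∈ b := by
    simp only [e, Basis.reindex_apply, he₀]
    exact Subtype.coe_prop _
  set w := projV (Submodule.span ℝ S) η with hw
  have hwS : w ∈ Submodule.span ℝ (e '' {i | e i ∈ s}) := by
    have himg : e '' {i | e i ∈ s} = s := by
      ext x
      constructor
      · rintro ⟨i, hi, rfl⟩
        exact hi
      · intro hx
        have hex : e (e₀.indexEquiv B ⟨x, hsb hx⟩) = x := by simp [e, he₀]
        exact ⟨_, by simpa only [Set.mem_ofPred_eq, hex] using hx, hex⟩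
    rw [himg, hspans]
    exact projV_mem_s14 _ _
  have hsupp := e.mem_span_image.1 hwS
  have hterm (i : Fin d) : e.repr w i * ⟪e i, η⟫ ≤ C * R ^ d * ‖w‖ * (a * R) := by
    have hnn : 0 ≤ C * R ^ d * ‖w‖ * (a * R) := by positivity
    by_cases h0 : e.repr w i = 0
    · rw [h0, zero_mul]
      exact hnn
    have his : e i ∈ S := hsS (hsupp (by simpa using h0))
    refine (le_abs_self _).trans ?_
    rw [abs_mul]
    refine mul_le_mul (hC r R hrR hR e (fun i => hbΘ (he i)) w i) ?_ (abs_nonneg _) (by positivity)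
    rw [real_inner_comm]
    refine (hη _ his).trans ?_
    gcongr
    exact (hS his).2.trans hrR
  have hsq : ‖w‖ ^ 2 ≤ d * (C * R ^ d * ‖w‖ * (a * R)) := by
    calc ‖w‖ ^ 2 = ⟪w, η⟫ := norm_projV_sq
      _ = ⟪∑ i, e.repr w i • e i, η⟫ := by rw [e.sum_repr]
      _ = ∑ i, e.repr w i * ⟪e i, η⟫ := by
          rw [sum_inner]
          simp only [real_inner_smul_left]
      _ ≤ ∑ _i : Fin d, C * R ^ d * ‖w‖ * (a * R) := Finset.sum_le_sum fun i _ => hterm i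
      _ = d * (C * R ^ d * ‖w‖ * (a * R)) := by simp
  rcases (norm_nonneg w).eq_or_lt with h0 | hpos
  · rw [← h0]
    positivity
  have hle : ‖w‖ ≤ d * C * R ^ (d + 1) * a := by
    refine le_of_mul_le_mul_right ?_ hpos
    calc ‖w‖ * ‖w‖ = ‖w‖ ^ 2 := (sq _).symm
      _ ≤ _ := hsq
      _ = d * C * R ^ (d + 1) * a * ‖w‖ := by ring
  refine hle.trans ?_
  gcongr
  linarith

end LatticeGeometry

section Chains

/-- One step of resonant congruence along a vector of `V`. -/
def resStepIn (B : Basis (Fin d) ℝ (EuclideanSpace ℝ (Fin d))) (ρ a r : ℝ)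
    (V : Submodule ℝ (EuclideanSpace ℝ (Fin d))) (ξ η : EuclideanSpace ℝ (Fin d)) : Prop :=
  ∃ θ ∈ Theta0 B r, θ ∈ V ∧ η ∈ upsTheta ρ a θ ξ

variable {B : Basis (Fin d) ℝ (EuclideanSpace ℝ (Fin d))} {ρ a r : ℝ}
  {V W : Submodule ℝ (EuclideanSpace ℝ (Fin d))} {ξ η θ : EuclideanSpace ℝ (Fin d)}

lemma upsTheta_symm (h : η ∈ upsTheta ρ a θ ξ) : ξ ∈ upsTheta ρ a θ η := by
  obtain ⟨h₁, h₂, l, hl⟩ := h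
  refine ⟨h₂, h₁, -l, ?_⟩
  rw [← neg_sub, hl]
  push_cast
  rw [neg_smul]

instance resStep_symm : Std.Symm (resStep B ρ a r) :=
  ⟨fun _ _ ⟨θ, hθ, h⟩ => ⟨θ, hθ, upsTheta_symm h⟩⟩

instance resStepIn_symm : Std.Symm (resStepIn B ρ a r V) :=
  ⟨fun _ _ ⟨θ, hθ, hV, h⟩ => ⟨θ, hθ, hV, upsTheta_symm h⟩⟩

lemma resStepIn_mono (hVW : V ≤ W) : resStepIn B ρ a r V ≤ resStepIn B ρ a r W :=
  fun _ _ ⟨θ, hθ, hV, h⟩ => ⟨θ, hθ, hVW hV, h⟩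

lemma sub_mem_of_reflTransGen_resStepIn (h : ReflTransGen (resStepIn B ρ a r V) ξ η) :
    ξ - η ∈ V := by
  induction h with
  | refl => simp
  | @tail b c _ hstep ih =>
    obtain ⟨θ, -, hθV, -, -, l, hl⟩ := hstep
    rw [← sub_add_sub_cancel ξ b c, hl]
    exact V.add_mem ih (V.smul_mem _ hθV)

lemma abs_inner_le_of_mem_layer (h : ξ ∈ layer ρ a θ) : |⟪ξ, θ⟫| ≤ ρ ^ a * ‖θ‖ := by
  rcases h with rfl | h
  · simp
  · exact h.le

/-- Adding a vector orthogonal to `V` preserves resonant steps along `V`. -/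
lemma resStepIn_add_of_orthogonal {ν : EuclideanSpace ℝ (Fin d)} (hν : ∀ v ∈ V, ⟪ν, v⟫ = 0)
    (h : resStepIn B ρ a r V ξ η) : resStepIn B ρ a r V (ξ + ν) (η + ν) := by
  obtain ⟨θ, hθ, hθV, h₁, h₂, l, hl⟩ := h
  have key {x : EuclideanSpace ℝ (Fin d)} (hx : x ∈ layer ρ a θ) : x + ν ∈ layer ρ a θ := by
    refine hx.imp_right fun h => ?_
    rwa [inner_add_left, hν θ hθV, add_zero]
  exact ⟨θ, hθ, hθV, key h₁, key h₂, l, by rw [add_sub_add_right_eq_sub, hl]⟩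

/-- Resonant chains along `V` have diameter bounded in terms of `dim V` only. The hypothesis `hX`
is the bound for projections onto spans of dual lattice vectors. -/
lemma norm_sub_add_le_of_reflTransGen_resStepIn {X : ℝ} (hX4 : 4 ≤ X) (hρ : 0 ≤ ρ ^ a)
    (hX : ∀ S ⊆ Theta0 B r, ∀ (η : EuclideanSpace ℝ (Fin d)) (b : ℝ), 0 ≤ b →
      (∀ θ ∈ S, |⟪η, θ⟫| ≤ b * ‖θ‖) → ‖projV (Submodule.span ℝ S) η‖ ≤ X / 4 * b)
    (m : ℕ) (V : Submodule ℝ (EuclideanSpace ℝ (Fin d))) (hV : finrank ℝ V ≤ m)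
    (ξ η : EuclideanSpace ℝ (Fin d)) (h : ReflTransGen (resStepIn B ρ a r V) ξ η) :
    ‖ξ - η‖ + ρ ^ a ≤ X ^ m * ρ ^ a := by
  induction m generalizing V ξ η with
  | zero =>
    have hbot : V = ⊥ := Submodule.finrank_eq_zero.1 (Nat.le_zero.1 hV)
    have hmem := sub_mem_of_reflTransGen_resStepIn h
    rw [hbot, Submodule.mem_bot] at hmem
    simp [hmem]
  | succ m ih =>
    have hXm : 1 ≤ X ^ m := one_le_pow₀ (by linarith)
    have hb : 0 ≤ X ^ m * ρ ^ a := by positivity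
    have hlow : X ^ m * ρ ^ a ≤ X ^ (m + 1) * ρ ^ a := by
      gcongr
      · linarith
      · exact Nat.le_succ m
    -- Either the starting point is close to `V^⊥`, or the chain stays in a smaller subspace.
    have dichotomy (x y : EuclideanSpace ℝ (Fin d))
        (hxy : ReflTransGen (resStepIn B ρ a r V) x y) :
        ‖projV V x‖ ≤ X / 4 * (X ^ m * ρ ^ a) ∨
        ∃ S ⊆ Theta0 B r, S ⊆ (V : Set (EuclideanSpace ℝ (Fin d))) ∧
          (∀ θ ∈ S, |⟪x, θ⟫| ≤ X ^ m * ρ ^ a * ‖θ‖) ∧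
          finrank ℝ (Submodule.span ℝ S) ≤ m ∧
          ReflTransGen (resStepIn B ρ a r (Submodule.span ℝ S)) x y := by
      induction hxy with
      | refl => exact Or.inr ⟨∅, Set.empty_subset _, Set.empty_subset _,
          fun θ hθ => hθ.elim, by rw [Submodule.span_empty, finrank_bot]; exact Nat.zero_le m,
          .refl⟩
      | @tail y z _ hstep ihc =>
        rcases ihc with hclose | ⟨S, hSΘ, hSV, hS, hdim, hchain⟩
        · exact Or.inl hclose
        obtain ⟨θ, hθ, hθV, hz⟩ := hstep
        have hθx : |⟪x, θ⟫| ≤ X ^ m * ρ ^ a * ‖θ‖ := by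
          have h₁ : |⟪x - y, θ⟫| ≤ ‖x - y‖ * ‖θ‖ := abs_real_inner_le_norm _ _
          have h₂ := abs_inner_le_of_mem_layer hz.1
          have h₃ := mul_le_mul_of_nonneg_right (ih _ hdim _ _ hchain) (norm_nonneg θ)
          have h₄ : ⟪x, θ⟫ = ⟪x - y, θ⟫ + ⟪y, θ⟫ := by rw [← inner_add_left, sub_add_cancel]
          rw [h₄]
          refine (abs_add_le _ _).trans ?_
          linarith
        have hSΘ' : insert θ S ⊆ Theta0 B r := Set.insert_subset hθ hSΘ
        have hSV' : insert θ S ⊆ (V : Set (EuclideanSpace ℝ (Fin d))) :=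
          Set.insert_subset hθV hSV
        have hS' : ∀ φ ∈ insert θ S, |⟪x, φ⟫| ≤ X ^ m * ρ ^ a * ‖φ‖ :=
          Set.forall_mem_insert.2 ⟨hθx, hS⟩
        by_cases hdim' : finrank ℝ (Submodule.span ℝ (insert θ S)) ≤ m
        · refine Or.inr ⟨insert θ S, hSΘ', hSV', hS', hdim', ?_⟩
          refine ReflTransGen.tail (ReflTransGen.mono (resStepIn_mono ?_) _ _ hchain) ?_
          · exact Submodule.span_mono (Set.subset_insert _ _)
          · exact ⟨θ, hθ, Submodule.subset_span (Set.mem_insert _ _), hz⟩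
        · have hspan : Submodule.span ℝ (insert θ S) = V :=
            Submodule.eq_of_le_of_finrank_le (Submodule.span_le.2 hSV') (by omega)
          refine Or.inl ?_
          rw [← hspan]
          exact hX _ hSΘ' _ _ hb hS'
    have hcase : ‖ξ - η‖ + ρ ^ a ≤ X ^ m * ρ ^ a ∨
        (‖projV V ξ‖ ≤ X / 4 * (X ^ m * ρ ^ a) ∧ ‖projV V η‖ ≤ X / 4 * (X ^ m * ρ ^ a)) := by
      rcases dichotomy ξ η h with h₁ | ⟨S, -, -, -, hS, hc⟩
      · rcases dichotomy η ξ (ReflTransGen.stdSymm.symm _ _ h) with h₂ | ⟨S, -, -, -, hS, hc⟩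
        · exact Or.inr ⟨h₁, h₂⟩
        · rw [norm_sub_rev]
          exact Or.inl (ih _ hS _ _ hc)
      · exact Or.inl (ih _ hS _ _ hc)
    rcases hcase with hle | ⟨h₁, h₂⟩
    · exact hle.trans hlow
    · have hsub : ξ - η = projV V ξ - projV V η := by
        rw [← projV_sub, projV_of_mem (sub_mem_of_reflTransGen_resStepIn h)]
      have hn : ‖ξ - η‖ ≤ X / 2 * (X ^ m * ρ ^ a) := by
        rw [hsub]
        refine (norm_sub_le _ _).trans ?_
        linarith
      have h1 : ρ ^ a ≤ X ^ m * ρ ^ a := le_mul_of_one_le_left hρ hXm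
      rw [pow_succ']
      nlinarith

end Chains

section Resonance

variable {B : Basis (Fin d) ℝ (EuclideanSpace ℝ (Fin d))} {ρ r X : ℝ} {α : ℕ → ℝ}

/-- The inequalities between the parameters that drive the resonant decomposition: `X / 4` bounds
the loss in passing from directions to their span, and consecutive powers of `ρ` absorb it. -/
structure ResonanceBounds (B : Basis (Fin d) ℝ (EuclideanSpace ℝ (Fin d))) (ρ r X : ℝ)
    (α : ℕ → ℝ) : Prop where
  four_le : 4 ≤ X
  rho_pos : 0 < ρ
  norm_projV_span_le : ∀ S ⊆ Theta0 B r, ∀ (η : EuclideanSpace ℝ (Fin d)) (b : ℝ), 0 ≤ b →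
    (∀ θ ∈ S, |⟪η, θ⟫| ≤ b * ‖θ‖) → ‖projV (Submodule.span ℝ S) η‖ ≤ X / 4 * b
  rpow_one_le : ∀ n, 1 ≤ n → n ≤ d → ρ ^ α 1 ≤ ρ ^ α n
  gap : ∀ n < d, X ^ (n + 1) * ρ ^ α n < ρ ^ α (n + 1)

lemma exists_resonanceBounds (d : ℕ) (hd : 2 ≤ d)
    (B : Basis (Fin d) ℝ (EuclideanSpace ℝ (Fin d))) (κ : ℝ) (α : ℕ → ℝ) :
    ∃ ρ₀ : ℝ, ∀ ρ r : ℝ, ρ₀ ≤ ρ → GoodParams B ρ r κ α →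
      ∃ X : ℝ, ResonanceBounds B ρ r X α := by
  obtain ⟨C, hC1, hC⟩ := exists_norm_projV_span_le B
  by_cases hκ : 0 < κ
  swap
  · exact ⟨0, fun ρ r _ h => absurd h.2.1 hκ⟩
  obtain ⟨ρ₀, hρ₀⟩ := Filter.eventually_atTop.1
    ((tendsto_rpow_atTop hκ).eventually_gt_atTop ((4 * C) ^ d))
  refine ⟨ρ₀, fun ρ r hρρ₀ ⟨hρ1, _, _, hα, _, hr, hspan⟩ => ?_⟩
  have hρ : 0 < ρ := by linarith
  have hR : 1 ≤ ρ ^ κ := Real.one_le_rpow hρ1 hκ.le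
  have hRd : 1 ≤ (ρ ^ κ) ^ (d + 1) := one_le_pow₀ hR
  have hX4 : 4 ≤ 4 * C * (ρ ^ κ) ^ (d + 1) := by nlinarith
  refine ⟨4 * C * (ρ ^ κ) ^ (d + 1), hX4, hρ, fun S hS η b hb hη => ?_, fun n h1n hnd => ?_,
    fun n hn => ?_⟩
  · refine (hC r (ρ ^ κ) hr hR hspan S hS η b hb hη).trans_eq ?_
    ring
  · refine Real.rpow_le_rpow_of_exponent_le hρ1 ?_
    induction n, h1n using Nat.le_induction with
    | base => exact le_rfl
    | succ k _ ih =>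
      have := hα k (by omega)
      have h0 : 0 ≤ 2 * κ * (d : ℝ) ^ 2 := by positivity
      linarith [ih (by omega)]
  · have hd' : (2 : ℝ) ≤ d := by exact_mod_cast hd
    calc (4 * C * (ρ ^ κ) ^ (d + 1)) ^ (n + 1) * ρ ^ α n
        ≤ (4 * C * (ρ ^ κ) ^ (d + 1)) ^ d * ρ ^ α n := by
          gcongr
          · linarith
          · omega
      _ = (4 * C) ^ d * (ρ ^ (κ * (d * (d + 1))) * ρ ^ α n) := by
          rw [mul_pow, ← pow_mul, Real.rpow_mul hρ.le, mul_assoc]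
          congr 2
          rw [← Real.rpow_natCast]
          push_cast
          rw [mul_comm (d : ℝ)]
      _ < ρ ^ κ * (ρ ^ (κ * (d * (d + 1))) * ρ ^ α n) := by
          gcongr
          exact hρ₀ ρ hρρ₀
      _ = ρ ^ (κ + κ * (d * (d + 1)) + α n) := by
          rw [Real.rpow_add hρ, Real.rpow_add hρ, mul_assoc]
      _ ≤ ρ ^ α (n + 1) := by
          refine Real.rpow_le_rpow_of_exponent_le hρ1 ?_
          have h1 := hα n hn
          have h2 : κ * (1 + d * (d + 1)) ≤ κ * (2 * (d : ℝ) ^ 2) := by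
            gcongr
            nlinarith
          nlinarith

variable {S : Set (EuclideanSpace ℝ (Fin d))} {η θ : EuclideanSpace ℝ (Fin d)} {t : ℝ}

/-- If a point moved away from `V = span S` along `V^⊥` lies in the layer of some `θ ∉ V`, then the
original point belongs to `Ξ₁(V + ℝθ)`. -/
lemma ResonanceBounds.mem_Xi1_span_insert (hb : ResonanceBounds B ρ r X α)
    (hS : S ⊆ Theta0 B r) (hθ : θ ∈ Theta0 B r) (hθS : θ ∉ Submodule.span ℝ S)
    (hη : ‖projV (Submodule.span ℝ S) η‖ ≤
      2 * X ^ finrank ℝ (Submodule.span ℝ S) * ρ ^ α (finrank ℝ (Submodule.span ℝ S)))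
    (ht : 0 ≤ t)
    (hlayer : η + t • (η - projV (Submodule.span ℝ S) η) ∈ layer ρ (α 1) θ) :
    η ∈ Xi1 ρ α (Submodule.span ℝ (insert θ S)) ∧
      finrank ℝ (Submodule.span ℝ S) < finrank ℝ (Submodule.span ℝ (insert θ S)) := by
  set V := Submodule.span ℝ S with hV
  set W := Submodule.span ℝ (insert θ S) with hW
  have hX := hb.four_le
  have hθ0 : θ ≠ 0 := fun h => hθS (h ▸ V.zero_mem)
  have hVW : V ≤ W := Submodule.span_mono (Set.subset_insert _ _)
  have hθW : θ ∈ W := Submodule.subset_span (Set.mem_insert _ _)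
  have hlt : finrank ℝ V < finrank ℝ W :=
    Submodule.finrank_lt_finrank_of_lt (lt_of_le_of_ne hVW fun h => hθS (h ▸ hθW))
  have hdim : finrank ℝ W = finrank ℝ V + 1 := by
    refine le_antisymm ?_ hlt
    rw [hW, Submodule.span_insert, ← hV, add_comm]
    refine (Submodule.finrank_add_le_finrank_add_finrank _ _).trans ?_
    rw [finrank_span_singleton hθ0]
  have hWd : finrank ℝ W ≤ d := by simpa using Submodule.finrank_le W
  refine ⟨?_, hlt⟩
  change ‖projV W η‖ < ρ ^ α (finrank ℝ W)
  rw [hdim]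
  rcases Nat.eq_zero_or_pos (finrank ℝ V) with h0 | hpos
  · have hbot : V = ⊥ := Submodule.finrank_eq_zero.1 h0
    have hp : projV V η = 0 := by
      have := projV_mem_s14 V η
      rwa [hbot, Submodule.mem_bot, ← hbot] at this
    rw [h0, zero_add]
    have hinner : |⟪η, θ⟫| < ρ ^ α 1 * ‖θ‖ := by
      rcases hlayer with h | h
      · exact absurd h hθ0
      refine lt_of_le_of_lt ?_ h
      rw [hp, sub_zero, inner_add_left, real_inner_smul_left, ← one_add_mul, abs_mul]
      refine le_mul_of_one_le_left (abs_nonneg _) ?_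
      rw [abs_of_nonneg (by linarith)]
      linarith
    obtain ⟨c, z, hz, hcz⟩ := Submodule.mem_span_insert.1 (projV_mem_s14 W η)
    rw [← hV, hbot, Submodule.mem_bot] at hz
    rw [hz, add_zero] at hcz
    rcases eq_or_ne c 0 with rfl | hc
    · rw [hcz, zero_smul, norm_zero]
      exact Real.rpow_pos_of_pos hb.rho_pos _
    have hn : ‖projV W η‖ = |c| * ‖θ‖ := by rw [hcz, norm_smul, Real.norm_eq_abs]
    have hsq : ‖projV W η‖ ^ 2 ≤ |c| * |⟪η, θ⟫| := by
      rw [norm_projV_sq, hcz, real_inner_smul_left, ← abs_mul, real_inner_comm]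
      exact le_abs_self _
    have hposc : 0 < |c| := abs_pos.2 hc
    have hposθ : 0 < ‖θ‖ := norm_pos_iff.2 hθ0
    refine lt_of_mul_lt_mul_right (a := |c| * ‖θ‖) ?_ (by positivity)
    calc ‖projV W η‖ * (|c| * ‖θ‖) = ‖projV W η‖ ^ 2 := by rw [← hn, sq]
      _ ≤ |c| * |⟪η, θ⟫| := hsq
      _ < |c| * (ρ ^ α 1 * ‖θ‖) := by gcongr
      _ = ρ ^ α 1 * (|c| * ‖θ‖) := by ring
  · set n := finrank ℝ V with hn
    have hρn : 0 < ρ ^ α n := Real.rpow_pos_of_pos hb.rho_pos _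
    have hXn : 1 ≤ X ^ n := one_le_pow₀ (by linarith)
    set ν := η - projV V η with hν
    have hsmall : ∀ φ ∈ insert θ S,
        |⟪η + t • ν, φ⟫| ≤ 2 * X ^ n * ρ ^ α n * ‖φ‖ := by
      refine Set.forall_mem_insert.2 ⟨?_, fun φ hφ => ?_⟩
      · refine (abs_inner_le_of_mem_layer hlayer).trans ?_
        gcongr
        have := hb.rpow_one_le n hpos (by omega)
        nlinarith
      · have hφV : φ ∈ V := Submodule.subset_span hφ
        rw [inner_add_left, real_inner_smul_left, inner_sub_projV_of_mem hφV, mul_zero, add_zero,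
          ← inner_projV_of_mem hφV]
        refine (abs_real_inner_le_norm _ _).trans ?_
        gcongr
    calc ‖projV W η‖ ≤ ‖projV W (η + t • ν)‖ := norm_projV_le_norm_projV_add_smul hVW ht
      _ ≤ X / 4 * (2 * X ^ n * ρ ^ α n) :=
          hb.norm_projV_span_le _ (Set.insert_subset hθ hS) _ _ (by positivity) hsmall
      _ ≤ X ^ (n + 1) * ρ ^ α n := by
          rw [pow_succ]
          have : 0 ≤ X ^ n * ρ ^ α n := by positivity
          nlinarith
      _ < ρ ^ α (n + 1) := hb.gap n (by omega)

variable {V : Submodule ℝ (EuclideanSpace ℝ (Fin d))} {ξ ζ : EuclideanSpace ℝ (Fin d)}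

lemma ResonanceBounds.norm_projV_le_of_reflTransGen (hb : ResonanceBounds B ρ r X α)
    (hξ : ξ ∈ Xi1 ρ α V) (h : ReflTransGen (resStepIn B ρ (α 1) r V) ξ η) :
    ‖projV V η‖ ≤ 2 * X ^ finrank ℝ V * ρ ^ α (finrank ℝ V) := by
  have hX := hb.four_le
  have hρn := Real.rpow_pos_of_pos hb.rho_pos (α (finrank ℝ V))
  have hρ1 := Real.rpow_pos_of_pos hb.rho_pos (α 1)
  have hXn : 1 ≤ X ^ finrank ℝ V := one_le_pow₀ (by linarith)
  have hξ' : ‖projV V ξ‖ < ρ ^ α (finrank ℝ V) := hξ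
  rcases Nat.eq_zero_or_pos (finrank ℝ V) with h0 | hpos
  · have hp := projV_mem_s14 V η
    rw [Submodule.finrank_eq_zero.1 h0, Submodule.mem_bot, ← Submodule.finrank_eq_zero.1 h0] at hp
    rw [hp, norm_zero]
    positivity
  have hdiam := norm_sub_add_le_of_reflTransGen_resStepIn hX hρ1.le hb.norm_projV_span_le _ V
    le_rfl ξ η h
  have hle := hb.rpow_one_le _ hpos (by simpa using Submodule.finrank_le V)
  have hsub : ‖projV V η‖ ≤ ‖projV V ξ‖ + ‖ξ - η‖ := by
    have h1 : projV V η = projV V ξ - projV V (ξ - η) := by rw [projV_sub]; abel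
    rw [h1]
    exact (norm_sub_le _ _).trans (by gcongr; exact norm_projV_le)
  have h1 := mul_le_mul_of_nonneg_left hle (by positivity : 0 ≤ X ^ finrank ℝ V)
  nlinarith

/-- Let `ξ ∈ Ξ₁(V)` be such that no point of `Υ(ξ)` lies in `Ξ₁(W)` for a lattice subspace `W` of
larger dimension. Then every resonant chain starting at `η + tν`, where `η` is joined to `ξ` by a
chain along `V`, is the translate by `tν` of a chain along `V` starting at `η`. -/
lemma ResonanceBounds.reflTransGen_resStepIn (hb : ResonanceBounds B ρ r X α)
    (hV : IsLatticeSubspace B r V) (hξ : ξ ∈ Xi1 ρ α V)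
    (hmax : ∀ W, IsLatticeSubspace B r W → finrank ℝ V < finrank ℝ W →
      ∀ x ∈ Ups B ρ (α 1) r ξ, x ∉ Xi1 ρ α W)
    (hη : ReflTransGen (resStepIn B ρ (α 1) r V) ξ η) (ht : 0 ≤ t)
    (h : ReflTransGen (resStep B ρ (α 1) r) (η + t • (ξ - projV V ξ)) ζ) :
    ReflTransGen (resStepIn B ρ (α 1) r V) η (ζ - t • (ξ - projV V ξ)) := by
  induction h with
  | refl => rw [add_sub_cancel_right]
  | @tail y z _ hstep ih =>
    set ν := ξ - projV V ξ with hν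
    obtain ⟨θ, hθ, hyz⟩ := hstep
    have hchain := hη.trans ih
    have hθV : θ ∈ V := by
      by_contra hθV
      obtain ⟨S, hS, rfl⟩ := hV
      have hνy : ν = (y - t • ν) - projV (Submodule.span ℝ S) (y - t • ν) :=
        sub_projV_eq_of_sub_mem (sub_mem_of_reflTransGen_resStepIn hchain)
      have hlayer : (y - t • ν) + t • ((y - t • ν) - projV (Submodule.span ℝ S) (y - t • ν)) ∈
          layer ρ (α 1) θ := by
        rw [← hνy, sub_add_cancel]
        exact hyz.1
      obtain ⟨hmem, hlt⟩ := hb.mem_Xi1_span_insert hS hθ hθV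
        (hb.norm_projV_le_of_reflTransGen hξ hchain) ht hlayer
      exact hmax _ ⟨_, Set.insert_subset hθ hS, rfl⟩ hlt _
        (ReflTransGen.mono (fun _ _ ⟨φ, hφ, _, h⟩ => ⟨φ, hφ, h⟩) _ _ hchain) hmem
    refine ih.tail ?_
    have hstep := resStepIn_add_of_orthogonal (B := B) (r := r) (ν := -(t • ν)) (fun v hv => by
      rw [inner_neg_left, real_inner_smul_left, inner_sub_projV_of_mem hv, mul_zero, neg_zero])
      ⟨θ, hθ, hθV, hyz⟩
    simpa only [← sub_eq_add_neg] using hstep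

end Resonance

/-- Lemma 5.21: for sufficiently large ρ, if ξ ∈ Ξ(V) and ν = ξ_{V^⊥},
then N(ξ + tν) = N(ξ) for all t ≥ 0; in particular N(ξ + tν) ⊆ V. -/
theorem resN_constant_along_perp_ray
    (d : ℕ) (hd : 2 ≤ d) (B : Basis (Fin d) ℝ (EuclideanSpace ℝ (Fin d)))
    (κ : ℝ) (α : ℕ → ℝ) :
    ∃ ρ₀ : ℝ, ∀ ρ r : ℝ, ρ₀ ≤ ρ → GoodParams B ρ r κ α →
      ∀ n : ℕ, n ≤ d →
      ∀ V : Submodule ℝ (EuclideanSpace ℝ (Fin d)), IsLatticeSubspace B r V →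
        Module.finrank ℝ V = n →
      ∀ ξ ∈ Xi B ρ r α V,
      ∀ t : ℝ, 0 ≤ t →
        resN B ρ (α 1) r (ξ + t • (ξ - projV V ξ)) = resN B ρ (α 1) r ξ ∧
        resN B ρ (α 1) r (ξ + t • (ξ - projV V ξ)) ⊆
          (V : Set (EuclideanSpace ℝ (Fin d))) := by
  obtain ⟨ρ₀, hρ₀⟩ := exists_resonanceBounds d hd B κ α
  refine ⟨ρ₀, fun ρ r hρ hgood n _ V hV _ ξ hξ t ht => ?_⟩
  obtain ⟨X, hb⟩ := hρ₀ ρ r hρ hgood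
  obtain ⟨⟨ξ₀, hξ₀, hξ₀ξ⟩, hnot⟩ := hξ
  have hξ₀ξ : ReflTransGen (resStep B ρ (α 1) r) ξ₀ ξ := hξ₀ξ
  have hmax : ∀ W, IsLatticeSubspace B r W → finrank ℝ V < finrank ℝ W →
      ∀ x ∈ Ups B ρ (α 1) r ξ₀, x ∉ Xi1 ρ α W := by
    intro W hW hlt x hx hxW
    refine hnot (Set.mem_biUnion (show W ∈ _ from ⟨hW, hlt⟩) ⟨x, hxW, ?_⟩)
    exact ReflTransGen.trans (ReflTransGen.stdSymm.symm _ _ hx) hξ₀ξ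
  have hchain₀ : ReflTransGen (resStepIn B ρ (α 1) r V) ξ₀ ξ := by
    simpa using hb.reflTransGen_resStepIn hV hξ₀ hmax .refl le_rfl (by simpa using hξ₀ξ)
  have hν : ξ₀ - projV V ξ₀ = ξ - projV V ξ :=
    sub_projV_eq_of_sub_mem (sub_mem_of_reflTransGen_resStepIn hchain₀)
  have hforget {x y : EuclideanSpace ℝ (Fin d)}
      (h : ReflTransGen (resStepIn B ρ (α 1) r V) x y) :
      ReflTransGen (resStep B ρ (α 1) r) x y :=
    ReflTransGen.mono (fun _ _ ⟨φ, hφ, _, h⟩ => ⟨φ, hφ, h⟩) _ _ h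
  have hdown (s : ℝ) (hs : 0 ≤ s) (m : EuclideanSpace ℝ (Fin d))
      (hm : m ∈ resN B ρ (α 1) r (ξ + s • (ξ - projV V ξ))) :
      ReflTransGen (resStepIn B ρ (α 1) r V) ξ (ξ + m) := by
    have hm : ReflTransGen (resStep B ρ (α 1) r) (ξ + s • (ξ - projV V ξ))
      (ξ + s • (ξ - projV V ξ) + m) := hm
    rw [← hν] at hm
    convert hb.reflTransGen_resStepIn hV hξ₀ hmax hchain₀ hs hm using 1
    abel
  refine ⟨Set.Subset.antisymm (fun m hm => hforget (hdown t ht m hm)) fun m hm => ?_,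
    fun m hm => ?_⟩
  · have hup := ReflTransGen.lift (p := resStepIn B ρ (α 1) r V)
      (fun x => x + t • (ξ - projV V ξ)) (fun _ _ h => resStepIn_add_of_orthogonal (fun v hv => by
        rw [real_inner_smul_left, inner_sub_projV_of_mem hv, mul_zero]) h) _ _
      (hdown 0 le_rfl m (by simpa using hm))
    refine hforget ?_
    rw [add_right_comm]
    exact hup
  · have hsub := sub_mem_of_reflTransGen_resStepIn (hdown t ht m hm)
    rw [sub_add_cancel_left] at hsub
    exact neg_mem_iff.1 hsub
end
end
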